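/- arXiv:1409.3159 — 2 statements merged into one kernel-verified Lean document; each statement's English description precedes it below -/
import Mathlib

section
/- Let G be a connected graph and k a positive integer. Then G has a spanning k-ended tree if and only if t_k = t_{k+1}. (Proposition 1) -/
open SimpleGraph

variable {V : Type*}

/-- A set of vertices is independent in `G`. -/
def IsIndSet (G : SimpleGraph V) (s : Set V) : Prop :=
  ∀ ⦃u⦄, u ∈ s → ∀ ⦃v⦄, v ∈ s → ¬ G.Adj u v

/-- The number of end-vertices (vertices of degree one) of a subgraph `H`. -/
noncomputable def endVertexCount {G : SimpleGraph V} (H : G.Subgraph) : ℕ :=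
  {v : V | v ∈ H.verts ∧ (H.neighborSet v).ncard = 1}.ncard

/-- `H` is a cycle; a single vertex and a single edge are regarded as
simple cycles of orders 1 and 2, respectively. -/
def IsCycleSubgraph {G : SimpleGraph V} (H : G.Subgraph) : Prop :=
  H.Connected ∧ (H.verts.ncard ≤ 2 ∨ ∀ v ∈ H.verts, (H.neighborSet v).ncard = 2)

/-- `H` is a `k`-ended tree in `G`: a tree with at most `k` end-vertices (leaves);
a cycle is regarded as a 1-ended tree. -/
def IsKEndedTree (G : SimpleGraph V) (k : ℕ) (H : G.Subgraph) : Prop :=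
  (H.coe.IsTree ∧ endVertexCount H ≤ k) ∨ (1 ≤ k ∧ IsCycleSubgraph H)

/-- `t k`: the order of a largest `k`-ended tree in `G`. -/
noncomputable def maxKEndedOrder (G : SimpleGraph V) (k : ℕ) : ℕ :=
  sSup {n | ∃ H : G.Subgraph, IsKEndedTree G k H ∧ H.verts.ncard = n}

/-- `σ m`: the minimum degree sum over independent sets of `m` vertices of `G`,
and `+∞` if the independence number of `G` is less than `m`. -/
noncomputable def minDegreeSum (G : SimpleGraph V) [Fintype V] [DecidableRel G.Adj]
    (m : ℕ) : ℕ∞ :=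
  ⨅ s ∈ {s : Finset V | s.card = m ∧ IsIndSet G ↑s}, (∑ v ∈ s, G.degree v : ℕ∞)

/-!
A `k`-ended tree with a vertex outside it can be enlarged: some `x` in it is adjacent to
some `y` outside it. A tree gains at most one leaf when the pendant edge `xy` is attached, and a
cycle becomes a tree once an edge `xz` is deleted; choosing that edge at `x` makes the leaf `x`
disappear again when `y` is attached, so only `y` and `z` remain as leaves. Hence `t_k < t_{k+1}`
as long as no `k`-ended tree spans `G`.
-/

/-- The set of end-vertices of a subgraph, whose cardinality is `endVertexCount`. It lets the
end-vertices other than the point of attachment of a new edge be counted. -/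
def endVertices {G : SimpleGraph V} (H : G.Subgraph) : Set V :=
  {v | v ∈ H.verts ∧ (H.neighborSet v).ncard = 1}

theorem exists_adj_mem_notMem_of_preconnected {G : SimpleGraph V} (hG : G.Preconnected)
    {s : Set V} (hs : s.Nonempty) (hs' : s ≠ Set.univ) : ∃ x ∈ s, ∃ y ∉ s, G.Adj x y := by
  obtain ⟨u, hu⟩ := hs
  obtain ⟨w, hw⟩ := (Set.ne_univ_iff_exists_notMem s).1 hs'
  obtain ⟨p⟩ := hG u w
  obtain ⟨d, -, hd₁, hd₂⟩ := p.exists_boundary_dart s hu hw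
  exact ⟨d.fst, hd₁, d.snd, hd₂, d.adj⟩

section Pendant

variable {G : SimpleGraph V} {T : G.Subgraph} {x y z : V}

theorem verts_sup_subgraphOfAdj (hx : x ∈ T.verts) (hxy : G.Adj x y) :
    (T ⊔ G.subgraphOfAdj hxy).verts = insert y T.verts := by
  rw [Subgraph.verts_sup, subgraphOfAdj_verts, Set.union_insert, Set.union_singleton,
    Set.insert_eq_of_mem (Set.mem_insert_of_mem y hx)]

theorem isTree_coe_iff_connected_and_ncard [Finite V] (H : G.Subgraph) :
    H.coe.IsTree ↔ H.Connected ∧ H.edgeSet.ncard + 1 = H.verts.ncard := by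
  rw [isTree_iff_connected_and_card, Subgraph.connected_iff', ← H.image_coe_edgeSet_coe,
    Set.ncard_image_of_injective _ (Sym2.map.injective Subtype.val_injective)]
  rfl

theorem isTree_coe_sup_subgraphOfAdj [Finite V] (hT : T.coe.IsTree) (hx : x ∈ T.verts)
    (hy : y ∉ T.verts) (hxy : G.Adj x y) : (T ⊔ G.subgraphOfAdj hxy).coe.IsTree := by
  rw [isTree_coe_iff_connected_and_ncard] at hT ⊢
  have hedge : s(x, y) ∉ T.edgeSet := fun h => hy (Subgraph.mem_edgeSet.1 h).snd_mem
  refine ⟨Subgraph.connected_sup hT.1.preconnected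
    (Subgraph.subgraphOfAdj_connected hxy).preconnected ⟨x, hx, by simp⟩, ?_⟩
  rw [verts_sup_subgraphOfAdj hx, Set.ncard_insert_of_notMem hy, ← hT.2, Subgraph.edgeSet_sup,
    edgeSet_subgraphOfAdj, Set.union_singleton, Set.ncard_insert_of_notMem hedge]

theorem endVertices_sup_subgraphOfAdj_subset (hxz : T.Adj x z) (hy : y ∉ T.verts)
    (hxy : G.Adj x y) :
    endVertices (T ⊔ G.subgraphOfAdj hxy) ⊆ insert y (endVertices T \ {x}) := by
  rintro v ⟨hv, hdeg⟩
  rw [verts_sup_subgraphOfAdj hxz.fst_mem] at hv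
  refine hv.imp_right fun hvT => ?_
  have hvy : v ≠ y := ne_of_mem_of_not_mem hvT hy
  have hvx : v ≠ x := by
    rintro rfl
    obtain ⟨w, hw⟩ := Set.ncard_eq_one.1 hdeg
    have hzw : z ∈ ({w} : Set V) := hw ▸ Or.inl hxz
    have hyw : y ∈ ({w} : Set V) := hw ▸ Or.inr (subgraphOfAdj_adj_self hxy)
    exact hy ((hyw.trans hzw.symm : y = z) ▸ hxz.snd_mem)
  refine ⟨⟨hvT, ?_⟩, hvx⟩
  rwa [Subgraph.neighborSet_sup, neighborSet_subgraphOfAdj_of_ne_of_ne hxy hvx hvy,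
    Set.union_empty] at hdeg

theorem isKEndedTree_sup_subgraphOfAdj [Finite V] {k : ℕ} (hT : T.coe.IsTree)
    (hk : (endVertices T \ {x}).ncard ≤ k) (hx : x ∈ T.verts) (hy : y ∉ T.verts)
    (hxy : G.Adj x y) : IsKEndedTree G (k + 1) (T ⊔ G.subgraphOfAdj hxy) := by
  have htree := isTree_coe_sup_subgraphOfAdj hT hx hy hxy
  rcases T.verts.subsingleton_or_nontrivial with hs | hn
  · -- A single edge has two leaves, but it counts as a cycle and hence as 1-ended.
    refine Or.inr ⟨k.succ_pos, ⟨htree.connected⟩, Or.inl ?_⟩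
    rw [verts_sup_subgraphOfAdj hx, hs.eq_singleton_of_mem hx]
    exact (Set.ncard_pair hxy.ne').le
  · have := hn.coe_sort
    have hconn : T.Connected := ⟨hT.connected⟩
    obtain ⟨z, hxz⟩ := hconn.preconnected.exists_adj_of_nontrivial ⟨x, hx⟩
    refine Or.inl ⟨htree, ?_⟩
    calc endVertexCount (T ⊔ G.subgraphOfAdj hxy)
        ≤ (insert y (endVertices T \ {x})).ncard :=
          Set.ncard_le_ncard (endVertices_sup_subgraphOfAdj_subset hxz hy hxy)
      _ ≤ (endVertices T \ {x}).ncard + 1 := Set.ncard_insert_le _ _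
      _ ≤ k + 1 := Nat.add_le_add_right hk 1

end Pendant

section Cycle

variable {G : SimpleGraph V} {x z : V}

theorem two_mul_card_edgeSet_of_forall_ncard_neighborSet_eq [Finite V] {d : ℕ}
    (hd : ∀ v, (G.neighborSet v).ncard = d) : 2 * Nat.card G.edgeSet = Nat.card V * d := by
  classical
  have := Fintype.ofFinite V
  have hdeg (v : V) : G.degree v = d := by
    rw [← hd v, ← card_neighborSet_eq_degree, ← Nat.card_eq_fintype_card, Nat.card_coe_set_eq]
  rw [Nat.card_eq_fintype_card, ← edgeFinset_card, ← sum_degrees_eq_twice_card_edges]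
  simp [hdeg]

theorem isTree_deleteEdges_of_two_regular [Finite V] (hG : G.Connected)
    (h2 : ∀ v, (G.neighborSet v).ncard = 2) (hxz : G.Adj x z) :
    (G.deleteEdges {s(x, z)}).IsTree := by
  have hcycles : G.IsCycles := fun v _ => h2 v
  have hcard := two_mul_card_edgeSet_of_forall_ncard_neighborSet_eq h2
  refine isTree_iff_connected_and_card.2 ⟨hG.connected_delete_edge_of_not_isBridge
    (not_not.2 (hcycles.reachable_deleteEdges hxz)), ?_⟩
  rw [edgeSet_deleteEdges, Nat.card_coe_set_eq,
    Set.ncard_sdiff_singleton_add_one (G.mem_edgeSet.2 hxz), ← Nat.card_coe_set_eq]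
  omega

theorem isTree_coe_deleteEdges_of_two_regular [Finite V] {H : G.Subgraph} (hH : H.Connected)
    (h2 : ∀ v ∈ H.verts, (H.neighborSet v).ncard = 2) (hxz : H.Adj x z) :
    (H.deleteEdges {s(x, z)}).coe.IsTree := by
  have h2' (v : H.verts) : (H.coe.neighborSet v).ncard = 2 := by
    rw [← h2 v v.2]
    exact Nat.card_congr (Subgraph.coeNeighborSetEquiv v)
  have htree := isTree_deleteEdges_of_two_regular hH.coe h2' hxz.coe
  rwa [Subgraph.deleteEdges_coe_eq, Set.image_singleton] at htree

theorem endVertices_deleteEdges_subset (H : G.Subgraph) (x z : V) :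
    endVertices (H.deleteEdges {s(x, z)}) ⊆ {x, z} ∪ endVertices H := by
  rintro v ⟨hv, hdeg⟩
  refine or_iff_not_imp_left.2 fun hne => ⟨hv, ?_⟩
  simp only [Set.mem_insert_iff, Set.mem_singleton_iff, not_or] at hne
  have hnbr : (H.deleteEdges {s(x, z)}).neighborSet v = H.neighborSet v := by
    ext w
    simp [hne.1, hne.2]
  rwa [hnbr] at hdeg

theorem ncard_endVertices_deleteEdges_sdiff_le_one {H : G.Subgraph} (hH : endVertices H = ∅)
    (x z : V) : (endVertices (H.deleteEdges {s(x, z)}) \ {x}).ncard ≤ 1 := by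
  have hsub : endVertices (H.deleteEdges {s(x, z)}) \ {x} ⊆ {z} := by
    have := endVertices_deleteEdges_subset H x z
    grind
  exact (Set.ncard_le_ncard hsub).trans_eq (Set.ncard_singleton z)

theorem IsCycleSubgraph.exists_isTree_ncard_endVertices_sdiff_le_one [Finite V] {H : G.Subgraph}
    (hH : IsCycleSubgraph H) (hx : x ∈ H.verts) :
    ∃ T : G.Subgraph, T.verts = H.verts ∧ T.coe.IsTree ∧ (endVertices T \ {x}).ncard ≤ 1 := by
  obtain ⟨hconn, hsmall | h2⟩ := hH
  · refine ⟨H, rfl, ⟨hconn.coe, .of_card_le_two ?_⟩, ?_⟩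
    · rw [ENat.card_eq_coe_natCard]
      exact_mod_cast hsmall
    · have hsub : endVertices H \ {x} ⊆ H.verts \ {x} :=
        Set.sdiff_subset_sdiff_left fun v hv => hv.1
      have hle := Set.ncard_le_ncard hsub
      have hcard := Set.ncard_sdiff_singleton_add_one hx
      omega
  · obtain ⟨z, hxz⟩ : (H.neighborSet x).Nonempty :=
      Set.nonempty_of_ncard_ne_zero (by simp [h2 x hx])
    have hend : endVertices H = ∅ :=
      Set.eq_empty_of_forall_notMem fun v hv => by simpa [h2 v hv.1] using hv.2
    exact ⟨H.deleteEdges {s(x, z)}, rfl, isTree_coe_deleteEdges_of_two_regular hconn h2 hxz,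
      ncard_endVertices_deleteEdges_sdiff_le_one hend x z⟩

end Cycle

theorem isKEndedTree_singletonSubgraph (G : SimpleGraph V) (k : ℕ) (v : V) :
    IsKEndedTree G k (G.singletonSubgraph v) := by
  refine Or.inl ⟨IsTree.coe_singletonSubgraph G v, ?_⟩
  simp [endVertexCount]

namespace IsKEndedTree

variable {G : SimpleGraph V} {k l : ℕ} {H : G.Subgraph}

theorem mono (hH : IsKEndedTree G k H) (hkl : k ≤ l) : IsKEndedTree G l H :=
  hH.imp (And.imp_right hkl.trans') (And.imp_left hkl.trans')

theorem nonempty_verts (hH : IsKEndedTree G k H) : H.verts.Nonempty := by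
  rcases hH with ⟨htree, -⟩ | ⟨-, hconn, -⟩
  · exact Set.nonempty_coe_sort.1 htree.connected.nonempty
  · exact hconn.nonempty

theorem exists_isTree_ncard_endVertices_sdiff_le [Finite V] (hH : IsKEndedTree G k H) {x : V}
    (hx : x ∈ H.verts) :
    ∃ T : G.Subgraph, T.verts = H.verts ∧ T.coe.IsTree ∧ (endVertices T \ {x}).ncard ≤ k := by
  rcases hH with ⟨htree, hle⟩ | ⟨hk, hcycle⟩
  · exact ⟨H, rfl, htree, (Set.ncard_le_ncard Set.sdiff_subset).trans hle⟩
  · obtain ⟨T, hverts, htree, hle⟩ := hcycle.exists_isTree_ncard_endVertices_sdiff_le_one hx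
    exact ⟨T, hverts, htree, hle.trans hk⟩

theorem exists_succ_of_not_isSpanning [Finite V] (hH : IsKEndedTree G k H)
    (hG : G.Preconnected) (hs : ¬ H.IsSpanning) :
    ∃ H' : G.Subgraph, IsKEndedTree G (k + 1) H' ∧ H'.verts.ncard = H.verts.ncard + 1 := by
  obtain ⟨x, hx, y, hy, hxy⟩ := exists_adj_mem_notMem_of_preconnected hG hH.nonempty_verts
    (mt Subgraph.isSpanning_iff.2 hs)
  obtain ⟨T, hverts, htree, hle⟩ := hH.exists_isTree_ncard_endVertices_sdiff_le hx
  rw [← hverts] at hx hy ⊢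
  exact ⟨T ⊔ G.subgraphOfAdj hxy, isKEndedTree_sup_subgraphOfAdj htree hle hx hy hxy,
    by rw [verts_sup_subgraphOfAdj hx, Set.ncard_insert_of_notMem hy]⟩

end IsKEndedTree

section MaxKEndedOrder

variable [Finite V] {G : SimpleGraph V} {k : ℕ} {H : G.Subgraph}

theorem card_mem_upperBounds_ncard_verts (G : SimpleGraph V) (k : ℕ) :
    Nat.card V ∈ upperBounds {n | ∃ H : G.Subgraph, IsKEndedTree G k H ∧ H.verts.ncard = n} := by
  rintro _ ⟨H, -, rfl⟩
  exact Set.ncard_le_card H.verts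

theorem IsKEndedTree.ncard_verts_le_maxKEndedOrder (hH : IsKEndedTree G k H) :
    H.verts.ncard ≤ maxKEndedOrder G k :=
  le_csSup ⟨_, card_mem_upperBounds_ncard_verts G k⟩ ⟨H, hH, rfl⟩

theorem IsKEndedTree.maxKEndedOrder_eq_card (hH : IsKEndedTree G k H) (hs : H.IsSpanning) :
    maxKEndedOrder G k = Nat.card V := by
  refine (csSup_le' (card_mem_upperBounds_ncard_verts G k)).antisymm ?_
  rw [← Set.ncard_univ, ← Subgraph.isSpanning_iff.1 hs]
  exact hH.ncard_verts_le_maxKEndedOrder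

theorem exists_isKEndedTree_ncard_verts_eq_maxKEndedOrder [Nonempty V] (G : SimpleGraph V)
    (k : ℕ) : ∃ H : G.Subgraph, IsKEndedTree G k H ∧ H.verts.ncard = maxKEndedOrder G k :=
  have hne : {n | ∃ H : G.Subgraph, IsKEndedTree G k H ∧ H.verts.ncard = n}.Nonempty :=
    ⟨_, _, isKEndedTree_singletonSubgraph G k (Classical.arbitrary V), rfl⟩
  Nat.sSup_mem hne ⟨_, card_mem_upperBounds_ncard_verts G k⟩

end MaxKEndedOrder

/-- **Proposition 1.** A connected graph `G` has a spanning `k`-ended tree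
if and only if `t_k = t_{k+1}`. -/
theorem proposition1 [Fintype V] (G : SimpleGraph V) (hG : G.Connected)
    (k : ℕ) (hk : 1 ≤ k) :
    (∃ H : G.Subgraph, H.IsSpanning ∧ IsKEndedTree G k H) ↔
      maxKEndedOrder G k = maxKEndedOrder G (k + 1) := by
  have := hG.nonempty
  constructor
  · rintro ⟨H, hs, hH⟩
    rw [hH.maxKEndedOrder_eq_card hs, (hH.mono k.le_succ).maxKEndedOrder_eq_card hs]
  · intro heq
    obtain ⟨H, hH, hmax⟩ := exists_isKEndedTree_ncard_verts_eq_maxKEndedOrder G k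
    refine ⟨H, ?_, hH⟩
    by_contra hs
    obtain ⟨H', hH', hcard⟩ := hH.exists_succ_of_not_isSpanning hG.preconnected hs
    have hle := hH'.ncard_verts_le_maxKEndedOrder
    omega
end

section
/- Let G be a connected graph and let k, λ, m be positive integers with 2 ≤ m ≤ min{k, λ} + 1. Then either t_{k+1} ≥ σ_m + λ(k − m + 1) + 1 or t_k ≥ t_{k+1} − λ + 1. (Theorem 2) -/
open SimpleGraph

variable {V : Type*}

/-!
Suppose `t_k + λ ≤ t_{k+1}`. Then a largest `(k + 1)`-ended tree `T` has exactly `k + 1`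
end-vertices and beats every `k`-ended tree by at least `λ` vertices. The end-vertices are
independent: an edge between two of them closes a cycle, and either `T` was a path or deleting an
edge of this cycle at a branch vertex leaves a `k`-ended tree on the same vertices. More
generally, near an end-vertex `y`, or near a neighbour `u` of an end-vertex `x` on the way from
`u` to `x`, there is no branch vertex of `T` and no neighbour of another end-vertex: such an
obstacle would allow cutting fewer than `λ` vertices off `T` to reach a `k`-ended tree.

Given a set `C` of `m` end-vertices, one therefore charges injectively to edges of `T`: each edge
`xu` of `G` with `x ∈ C` goes to an edge shortly behind `u` in the direction of `x`, at a distance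
that tells apart the vertices of `C` in that direction, and each of the `k + 1 - m` end-vertices
outside `C` contributes the first `λ` edges of its pendant path. Since `T` has one edge less than
vertices, this gives `σ_m + λ(k + 1 - m) + 1 ≤ t_{k+1}`.
-/

/-- The number of neighbours of `v` in the subgraph `T`; it is `0` if `v` is not a vertex of `T`. -/
noncomputable def ndegree {G : SimpleGraph V} (T : G.Subgraph) (v : V) : ℕ :=
  (T.neighborSet v).ncard

/-- The set of end-vertices of a subgraph, counted by `endVertexCount`. -/
def leafSet {G : SimpleGraph V} (T : G.Subgraph) : Set V :=
  {v | v ∈ T.verts ∧ ndegree T v = 1}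

section Degree

variable [Finite V] {G : SimpleGraph V} {T : G.Subgraph} {v a b c : V}

lemma mem_leafSet_iff : v ∈ leafSet T ↔ ndegree T v = 1 := by
  refine ⟨And.right, fun h => ⟨?_, h⟩⟩
  obtain ⟨w, hw⟩ := (Set.ncard_pos (Set.toFinite (T.neighborSet v))).1
    (one_pos.trans_eq h.symm)
  exact T.edge_vert hw

lemma two_le_ndegree (ha : T.Adj v a) (hb : T.Adj v b) (hab : a ≠ b) : 2 ≤ ndegree T v :=
  (Set.ncard_pair hab).symm.trans_le
    (Set.ncard_le_ncard (Set.pair_subset ha hb) (Set.toFinite _))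

lemma eq_of_ndegree_le_one (h : ndegree T v ≤ 1) (ha : T.Adj v a) (hb : T.Adj v b) : a = b :=
  Set.ncard_le_one (Set.toFinite _) |>.1 h a ha b hb

lemma eq_or_eq_of_ndegree_le_two (h : ndegree T v ≤ 2) (ha : T.Adj v a) (hb : T.Adj v b)
    (hab : a ≠ b) (hc : T.Adj v c) : c = a ∨ c = b := by
  by_contra! hne
  have hsub : {c, a, b} ⊆ T.neighborSet v := by rintro x (rfl | rfl | rfl) <;> assumption
  have hcard := Set.ncard_le_ncard hsub (Set.toFinite _)
  rw [Set.ncard_eq_three.2 ⟨c, a, b, hne.1, hne.2, hab, rfl⟩] at hcard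
  exact absurd h (not_le.2 hcard)

end Degree

section Tree

variable {G : SimpleGraph V} {T T' : G.Subgraph}

lemma reachable_of_forall_adj {W : Type*} {H : SimpleGraph V} {H' : SimpleGraph W} (f : V → W)
    (hf : ∀ a b, H.Adj a b → H'.Reachable (f a) (f b)) {a b : V} (h : H.Reachable a b) :
    H'.Reachable (f a) (f b) := by
  obtain ⟨w⟩ := h
  induction w with
  | nil => exact Reachable.rfl
  | cons hab _ ih => exact (hf _ _ hab).trans ih

lemma connected_iff_reachable_spanningCoe : T.Connected ↔ T.verts.Nonempty ∧
    ∀ u ∈ T.verts, ∀ v ∈ T.verts, T.spanningCoe.Reachable u v := by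
  classical
  rw [Subgraph.connected_iff, Subgraph.preconnected_iff, and_comm]
  refine and_congr_right fun _ => ⟨fun h u hu v hv =>
    (h ⟨u, hu⟩ ⟨v, hv⟩).map T.coeEmbeddingSpanningCoe.toHom, fun h u v => ?_⟩
  have huv := reachable_of_forall_adj (H' := T.coe)
    (fun a => if ha : a ∈ T.verts then ⟨a, ha⟩ else u) (fun a b hab => ?_) (h u u.2 v v.2)
  · simpa using huv
  · rw [dif_pos (T.edge_vert hab), dif_pos (T.edge_vert hab.symm)]
    exact Adj.reachable hab

lemma verts_subset_of_adj_closed (hT : T.Connected) {A : Set V} {a : V} (ha : a ∈ A)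
    (haT : a ∈ T.verts) (hA : ∀ b ∈ A, ∀ c, T.Adj b c → c ∈ A) : T.verts ⊆ A := by
  intro v hv
  by_contra hvA
  obtain ⟨w⟩ := (connected_iff_reachable_spanningCoe.1 hT).2 a haT v hv
  obtain ⟨d, -, hd, hd'⟩ := w.exists_boundary_dart A ha hvA
  exact hd' (hA _ hd _ d.adj)

lemma natCard_coe_edgeSet (T : G.Subgraph) : Nat.card T.coe.edgeSet = T.edgeSet.ncard := by
  rw [← T.image_coe_edgeSet_coe, Set.ncard_image_of_injective _
    (Sym2.map.injective Subtype.val_injective), ← Nat.card_coe_set_eq]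

lemma connected_of_isTree (h : T.coe.IsTree) : T.Connected := ⟨h.connected⟩

lemma isTree_of_le (hT : T.coe.IsTree) (hle : T' ≤ T) (hc : T'.Connected) : T'.coe.IsTree :=
  ⟨hc.coe, hT.isAcyclic.comap (Subgraph.inclusion hle) (Subgraph.inclusion.injective hle)⟩

variable [Finite V]

lemma ncard_edgeSet_of_isTree (h : T.coe.IsTree) : T.edgeSet.ncard + 1 = T.verts.ncard := by
  rw [← natCard_coe_edgeSet, ← Nat.card_coe_set_eq]
  exact (isTree_iff_connected_and_card.1 h).2

lemma isTree_of_ncard_edgeSet_le (h : T.Connected) (hc : T.edgeSet.ncard + 1 ≤ T.verts.ncard) :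
    T.coe.IsTree := by
  rw [← natCard_coe_edgeSet, ← Nat.card_coe_set_eq] at hc
  exact isTree_iff_connected_and_card.2
    ⟨h.coe, hc.antisymm h.coe.card_vert_le_card_edgeSet_add_one⟩

end Tree

/-! ### Paths -/

/-- The vertices `p 0, …, p n` form a path of length `n` in `T`; the values of `p` beyond `n` are
irrelevant. Indexing by `ℕ` makes subpaths and reversals reindexings of the same sequence. -/
structure IsPathSeq {G : SimpleGraph V} (T : G.Subgraph) (p : ℕ → V) (n : ℕ) : Prop where
  adj : ∀ i < n, T.Adj (p i) (p (i + 1))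
  injOn : Set.InjOn p (Set.Iic n)

namespace IsPathSeq

variable {G : SimpleGraph V} {T T' : G.Subgraph} {p q : ℕ → V} {n n' i j : ℕ}

lemma eq_iff (hp : IsPathSeq T p n) (hi : i ≤ n) (hj : j ≤ n) : p i = p j ↔ i = j :=
  hp.injOn.eq_iff hi hj

lemma mono (hp : IsPathSeq T p n) (hj : j ≤ n) : IsPathSeq T p j :=
  ⟨fun i hi => hp.adj i (by omega), hp.injOn.mono (Set.Iic_subset_Iic.2 hj)⟩

lemma drop (hp : IsPathSeq T p n) (h : i + j ≤ n) : IsPathSeq T (fun a => p (i + a)) j :=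
  ⟨fun a ha => hp.adj (i + a) (by omega), fun a ha b hb hab => by
    simp only [Set.mem_Iic] at ha hb
    rw [hp.eq_iff (by omega) (by omega)] at hab
    omega⟩

lemma reverse (hp : IsPathSeq T p n) (hi : i ≤ n) (hj : j ≤ i) :
    IsPathSeq T (fun a => p (i - a)) j := by
  refine ⟨fun a ha => ?_, fun a ha b hb hab => ?_⟩
  · have hadj := hp.adj (i - (a + 1)) (by omega)
    rw [show i - (a + 1) + 1 = i - a by omega] at hadj
    exact hadj.symm
  · simp only [Set.mem_Iic] at ha hb
    rw [hp.eq_iff (by omega) (by omega)] at hab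
    omega

lemma mem_verts (hp : IsPathSeq T p n) (hn : 0 < n) (hi : i ≤ n) : p i ∈ T.verts := by
  obtain rfl | hlt := hi.eq_or_lt
  · obtain ⟨j, rfl⟩ := Nat.exists_eq_add_one.2 hn
    exact T.edge_vert (hp.adj j (by omega)).symm
  · exact T.edge_vert (hp.adj i hlt)

lemma apply_notMem_image_Iio (hp : IsPathSeq T p n) : p n ∉ p '' Set.Iio n := by
  rintro ⟨j, hj, he⟩
  exact hj.ne ((hp.eq_iff (le_of_lt hj) le_rfl).1 he)

variable [Finite V]

lemma two_le_ndegree (hp : IsPathSeq T p n) (h0 : 0 < i) (hi : i < n) : 2 ≤ ndegree T (p i) := by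
  obtain ⟨j, rfl⟩ := Nat.exists_eq_add_one.2 h0
  refine _root_.two_le_ndegree (hp.adj j (by omega)).symm (hp.adj (j + 1) hi) fun h => ?_
  rw [hp.eq_iff (by omega) (by omega)] at h
  omega

lemma eq_of_mem_leafSet (hp : IsPathSeq T p n) (h0 : 0 < i) (hi : i ≤ n) (hl : p i ∈ leafSet T) :
    i = n := by
  by_contra hne
  have := hp.two_le_ndegree h0 (by omega)
  rw [mem_leafSet_iff.1 hl] at this
  omega

lemma eq_add_one_or_add_one_eq (hp : IsPathSeq T p n) (h0 : 0 < i) (hi : i < n)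
    (hd : ndegree T (p i) ≤ 2) {v : V} (hv : T.Adj (p i) v) : v = p (i - 1) ∨ v = p (i + 1) := by
  obtain ⟨j, rfl⟩ := Nat.exists_eq_add_one.2 h0
  refine eq_or_eq_of_ndegree_le_two hd (hp.adj j (by omega)).symm (hp.adj (j + 1) hi) ?_ hv
  rw [Ne, hp.eq_iff (by omega) (by omega)]
  omega

lemma eq_of_ndegree_le_two (hp : IsPathSeq T p n) (hq : IsPathSeq T q n) (h0 : p 0 = q 0)
    (h1 : p 1 = q 1) (hd : ∀ j, 0 < j → j < n → ndegree T (p j) ≤ 2) (hi : i ≤ n) : p i = q i := by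
  induction i using Nat.twoStepInduction with
  | zero => exact h0
  | one => exact h1
  | more i ih₀ ih₁ =>
    have e₀ : p i = q i := ih₀ (by omega)
    have e₁ : p (i + 1) = q (i + 1) := ih₁ (by omega)
    have hadj : T.Adj (p (i + 1)) (q (i + 2)) := e₁ ▸ hq.adj (i + 1) (by omega)
    have hback : q (i + 2) ≠ p i := by
      rw [e₀, Ne, hq.eq_iff (by omega) (by omega)]
      omega
    exact ((hp.eq_add_one_or_add_one_eq (by omega) (by omega) (hd _ (by omega) (by omega))
      hadj).resolve_left hback).symm

lemma eq_sub_add_of_adj_eq {r t : ℕ} (hp : IsPathSeq T p n) (hq : IsPathSeq T q n') (hr : r < n)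
    (ht : t < n') (hrt : r ≤ t) (h0 : p r = q t) (h1 : p (r + 1) = q (t + 1))
    (hd : ∀ j, 0 < j → j ≤ r → ndegree T (p j) ≤ 2) (hi : i ≤ r + 1) : p i = q (t - r + i) := by
  have h := (hp.reverse (i := r + 1) (by omega) le_rfl).eq_of_ndegree_le_two
    (hq.reverse (i := t + 1) (by omega) (by omega)) h1 h0 (fun j _ _ => hd _ (by omega) (by omega))
    (i := r + 1 - i) (by omega)
  rwa [show r + 1 - (r + 1 - i) = i by omega,
    show t + 1 - (r + 1 - i) = t - r + i by omega] at h

lemma eq_add_of_adj_eq_swap {r t : ℕ} (hp : IsPathSeq T p n) (hq : IsPathSeq T q n') (hr : r < n)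
    (ht : t < n') (hn : p n ∈ leafSet T) (h0 : p r = q (t + 1)) (h1 : p (r + 1) = q t)
    (hd : ∀ j, 0 < j → j ≤ t → ndegree T (q j) ≤ 2) : r + 1 + t ≤ n ∧ q 0 = p (r + 1 + t) := by
  have key : ∀ s ≤ t + 1, r + s ≤ n → q (t + 1 - s) = p (r + s) := fun s hs hsn =>
    (hq.reverse (i := t + 1) (by omega) hs).eq_of_ndegree_le_two (hp.drop hsn) h0.symm h1.symm
      (fun j _ _ => hd _ (by omega) (by omega)) le_rfl
  have hle : r + 1 + t ≤ n := by
    by_contra! hlt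
    have hend : q (t + 1 - (n - r)) = p n := by
      rw [key _ (by omega) (by omega), Nat.add_sub_cancel' hr.le]
    have := hq.eq_of_mem_leafSet (by omega) (by omega) (hend ▸ hn)
    omega
  have h := key (t + 1) le_rfl (by omega)
  rw [Nat.sub_self] at h
  exact ⟨hle, by rw [h, add_assoc, add_comm t]⟩

/-- Either one path is a tail of the other, or they traverse the common edge in opposite directions
and `p` runs into the start of `q`. -/
lemma edge_eq_cases {r t : ℕ} (hp : IsPathSeq T p n) (hq : IsPathSeq T q n') (hr : r < n)
    (ht : t < n') (hn : p n ∈ leafSet T) (hpd : ∀ j, 0 < j → j ≤ r → ndegree T (p j) ≤ 2)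
    (hqd : ∀ j, 0 < j → j ≤ t → ndegree T (q j) ≤ 2)
    (he : s(p r, p (r + 1)) = s(q t, q (t + 1))) :
    (r ≤ t ∧ ∀ i ≤ r + 1, p i = q (t - r + i)) ∨ (t ≤ r ∧ ∀ i ≤ t + 1, q i = p (r - t + i)) ∨
      (r + 1 + t ≤ n ∧ q 0 = p (r + 1 + t) ∧ p r = q (t + 1) ∧ p (r + 1) = q t) := by
  rcases Sym2.eq_iff.1 he with ⟨h0, h1⟩ | ⟨h0, h1⟩
  · rcases le_total r t with hrt | htr
    · exact Or.inl ⟨hrt, fun i hi => hp.eq_sub_add_of_adj_eq hq hr ht hrt h0 h1 hpd hi⟩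
    · exact Or.inr (Or.inl ⟨htr, fun i hi =>
        hq.eq_sub_add_of_adj_eq hp ht hr htr h0.symm h1.symm hqd hi⟩)
  · obtain ⟨hle, h⟩ := hp.eq_add_of_adj_eq_swap hq hr ht hn h0 h1 hqd
    exact Or.inr (Or.inr ⟨hle, h, h0, h1⟩)

end IsPathSeq

section Geodesic

variable {G : SimpleGraph V} {T : G.Subgraph} {u x : V} {i : ℕ}

open Classical in
/-- A chosen shortest path of `T` from `u` to `x`, of length `T.spanningCoe.dist u x`; constantly
`u` if `x` cannot be reached from `u`. -/
noncomputable def geodesic (T : G.Subgraph) (u x : V) : ℕ → V :=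
  if h : T.spanningCoe.Reachable u x then h.exists_path_of_dist.choose.getVert else fun _ => u

@[simp] lemma geodesic_zero : geodesic T u x 0 = u := by
  unfold geodesic
  split_ifs <;> simp

lemma exists_geodesic_eq_getVert (h : T.spanningCoe.Reachable u x) :
    ∃ w : T.spanningCoe.Walk u x,
      w.IsPath ∧ w.length = T.spanningCoe.dist u x ∧ geodesic T u x = w.getVert :=
  have hw := h.exists_path_of_dist.choose_spec
  ⟨_, hw.1, hw.2, dif_pos h⟩

lemma isPathSeq_geodesic (h : T.spanningCoe.Reachable u x) :
    IsPathSeq T (geodesic T u x) (T.spanningCoe.dist u x) := by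
  obtain ⟨w, hw, hlen, hg⟩ := exists_geodesic_eq_getVert h
  rw [← hlen, hg]
  exact ⟨fun i hi => w.adj_getVert_succ hi, hw.getVert_injOn⟩

lemma geodesic_dist (h : T.spanningCoe.Reachable u x) :
    geodesic T u x (T.spanningCoe.dist u x) = x := by
  obtain ⟨w, -, hlen, hg⟩ := exists_geodesic_eq_getVert h
  rw [← hlen, hg, w.getVert_length]

lemma dist_geodesic (h : T.spanningCoe.Reachable u x) (hi : i ≤ T.spanningCoe.dist u x) :
    T.spanningCoe.dist (geodesic T u x i) x = T.spanningCoe.dist u x - i := by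
  obtain ⟨w, -, hlen, hg⟩ := exists_geodesic_eq_getVert h
  have hle : T.spanningCoe.dist (w.getVert i) x ≤ (w.drop i).length := dist_le _
  obtain ⟨w', hw'⟩ := (w.drop i).reachable.exists_walk_length_eq_dist
  have hge := dist_le ((w.take i).append w')
  rw [Walk.length_append, Walk.take_length] at hge
  rw [Walk.drop_length] at hle
  rw [hg]
  omega

end Geodesic

/-! ### Exchanging edges and trimming -/

section Surgery

variable {G : SimpleGraph V} {T : G.Subgraph} {p : ℕ → V} {n s t i : ℕ} {a b c d v x u : V}

lemma neighborSet_deleteVerts {A : Set V} (hv : v ∉ A) :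
    (T.deleteVerts A).neighborSet v = T.neighborSet v \ A := by
  ext w
  simp only [Subgraph.mem_neighborSet, Subgraph.deleteVerts_adj, Set.mem_sdiff]
  exact ⟨fun h => ⟨h.2.2.2.2, h.2.2.2.1⟩,
    fun h => ⟨T.edge_vert h.1, hv, T.edge_vert h.1.symm, h.2, h.1⟩⟩

lemma edgeSet_subgraph_deleteEdges (T : G.Subgraph) (E : Set (Sym2 V)) :
    (T.deleteEdges E).edgeSet = T.edgeSet \ E := by
  ext e
  induction e with
  | _ x y => simp

lemma sup_subgraphOfAdj_adj (h : G.Adj a b) :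
    (T ⊔ G.subgraphOfAdj h).Adj u v ↔ T.Adj u v ∨ s(a, b) = s(u, v) := by
  simp

lemma verts_sup_subgraphOfAdj_s5 (h : G.Adj a b) (ha : a ∈ T.verts) (hb : b ∈ T.verts) :
    (T ⊔ G.subgraphOfAdj h).verts = T.verts := by
  rw [Subgraph.verts_sup, subgraphOfAdj_verts, Set.union_eq_left.2 (Set.pair_subset ha hb)]

lemma ncard_edgeSet_sup_subgraphOfAdj_le (T : G.Subgraph) (h : G.Adj a b) :
    (T ⊔ G.subgraphOfAdj h).edgeSet.ncard ≤ T.edgeSet.ncard + 1 := by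
  rw [Subgraph.edgeSet_sup, edgeSet_subgraphOfAdj, ← Set.ncard_singleton s(a, b)]
  exact Set.ncard_union_le _ _

lemma reachable_of_adj_add_one {H : SimpleGraph V} (hst : s ≤ t)
    (h : ∀ j, s ≤ j → j < t → H.Adj (p j) (p (j + 1))) : H.Reachable (p s) (p t) := by
  induction t, hst using Nat.le_induction with
  | base => exact Reachable.rfl
  | succ j hj ih =>
    exact (ih fun i hi hij => h i hi (by omega)).trans (h j hj (by omega)).reachable

/-- The subgraph `T` with the edge `cd` replaced by the edge `ab` of `G`. -/
def exchangeEdge (T : G.Subgraph) (c d : V) (h : G.Adj a b) : G.Subgraph :=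
  T.deleteEdges {s(c, d)} ⊔ G.subgraphOfAdj h

lemma exchangeEdge_adj (h : G.Adj a b) :
    (exchangeEdge T c d h).Adj u v ↔ T.Adj u v ∧ s(u, v) ≠ s(c, d) ∨ s(a, b) = s(u, v) := by
  simp [exchangeEdge]

variable [Finite V]

section Degree

open Classical in
lemma ndegree_deleteEdges_singleton (h : T.Adj c d) (v : V) :
    ndegree (T.deleteEdges {s(c, d)}) v + (if v = c ∨ v = d then 1 else 0) = ndegree T v := by
  have hne := h.ne
  have hmem : ∀ e, T.Adj v e → (∀ w, s(v, w) = s(c, d) ↔ w = e) →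
      ndegree (T.deleteEdges {s(c, d)}) v + 1 = ndegree T v := by
    intro e he hw
    rw [ndegree, show (T.deleteEdges {s(c, d)}).neighborSet v = T.neighborSet v \ {e} by
      ext w; simp [hw]]
    exact Set.ncard_sdiff_singleton_add_one he (Set.toFinite _)
  split_ifs with hv
  · rcases hv with rfl | rfl
    · exact hmem d h (by simp)
    · exact hmem c h.symm (by simp)
  · push Not at hv
    rw [ndegree, ndegree, add_zero]
    congr 1
    ext w
    simp [hv.1, hv.2]

open Classical in
lemma ndegree_sup_subgraphOfAdj (h : G.Adj a b) (hT : ¬ T.Adj a b) (v : V) :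
    ndegree (T ⊔ G.subgraphOfAdj h) v = ndegree T v + (if v = a ∨ v = b then 1 else 0) := by
  have hab : (T ⊔ G.subgraphOfAdj h).Adj a b := (sup_subgraphOfAdj_adj h).2 (Or.inr rfl)
  rw [← ndegree_deleteEdges_singleton hab]
  have hdel : ((T ⊔ G.subgraphOfAdj h).deleteEdges {s(a, b)}).neighborSet v = T.neighborSet v := by
    ext w
    simp only [Subgraph.mem_neighborSet, Subgraph.deleteEdges_adj, sup_subgraphOfAdj_adj,
      Set.mem_singleton_iff]
    refine ⟨fun hw => hw.1.resolve_right (Ne.symm hw.2), fun hw => ⟨Or.inl hw, fun he => hT ?_⟩⟩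
    rwa [← Subgraph.mem_edgeSet, ← he]
  rw [ndegree, ndegree, hdel]

open Classical in
lemma ndegree_exchangeEdge (h : G.Adj a b) (hcd : T.Adj c d) (hT : ¬ T.Adj a b) (v : V) :
    ndegree (exchangeEdge T c d h) v + (if v = c ∨ v = d then 1 else 0) =
      ndegree T v + (if v = a ∨ v = b then 1 else 0) := by
  have hT' : ¬ (T.deleteEdges {s(c, d)}).Adj a b := fun hab => hT (T.deleteEdges_le _ |>.2 hab)
  rw [exchangeEdge, ndegree_sup_subgraphOfAdj h hT', ← ndegree_deleteEdges_singleton hcd]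
  ring

end Degree

lemma isTree_sup_subgraphOfAdj (hT : T.coe.IsTree) (hx : x ∈ T.verts) (hu : u ∉ T.verts)
    (h : G.Adj x u) : (T ⊔ G.subgraphOfAdj h).coe.IsTree := by
  have hverts : (T ⊔ G.subgraphOfAdj h).verts = insert u T.verts := by
    rw [Subgraph.verts_sup, subgraphOfAdj_verts, Set.pair_comm, Set.union_insert,
      Set.union_singleton, Set.insert_eq_of_mem hx]
  refine isTree_of_ncard_edgeSet_le (Subgraph.connected_sup (connected_of_isTree hT).preconnected
    (Subgraph.subgraphOfAdj_connected h).preconnected ⟨x, hx, Or.inl rfl⟩) ?_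
  rw [hverts, Set.ncard_insert_of_notMem hu, ← ncard_edgeSet_of_isTree hT]
  exact Nat.add_le_add_right (ncard_edgeSet_sup_subgraphOfAdj_le T h) 1

lemma isTree_exchangeEdge (hT : T.coe.IsTree) (hp : IsPathSeq T p n) (ht : t < n)
    (h : G.Adj (p n) (p 0)) : (exchangeEdge T (p t) (p (t + 1)) h).coe.IsTree := by
  set T' := exchangeEdge T (p t) (p (t + 1)) h
  have hadj : ∀ j < n, j ≠ t → T'.Adj (p j) (p (j + 1)) := by
    intro j hj hjt
    refine (exchangeEdge_adj h).2 (Or.inl ⟨hp.adj j hj, fun he => ?_⟩)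
    rcases Sym2.eq_iff.1 he with ⟨h0, -⟩ | ⟨h0, h1⟩
    · exact hjt ((hp.eq_iff (by omega) (by omega)).1 h0)
    · rw [hp.eq_iff (by omega) (by omega)] at h0 h1
      omega
  have hclose : T'.Adj (p n) (p 0) := (exchangeEdge_adj h).2 (Or.inr rfl)
  have hcut : T'.spanningCoe.Reachable (p t) (p (t + 1)) :=
    (reachable_of_adj_add_one (Nat.zero_le t) fun j _ hj =>
      hadj j (by omega) (by omega)).symm.trans <| (Adj.reachable hclose).symm.trans
    (reachable_of_adj_add_one (p := p) ht fun j _ hj => hadj j hj (by omega)).symm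
  have hreach : ∀ u v, T.spanningCoe.Adj u v → T'.spanningCoe.Reachable u v := by
    intro u v huv
    by_cases he : s(u, v) = s(p t, p (t + 1))
    · rcases Sym2.eq_iff.1 he with ⟨rfl, rfl⟩ | ⟨rfl, rfl⟩
      exacts [hcut, hcut.symm]
    · exact Adj.reachable ((exchangeEdge_adj h).2 (Or.inl ⟨huv, he⟩))
  have hverts : T'.verts = T.verts := verts_sup_subgraphOfAdj_s5 h
    (hp.mem_verts (by omega) le_rfl) (hp.mem_verts (by omega) (Nat.zero_le n))
  obtain ⟨hne, hconn⟩ := connected_iff_reachable_spanningCoe.1 (connected_of_isTree hT)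
  refine isTree_of_ncard_edgeSet_le (connected_iff_reachable_spanningCoe.2 ?_) ?_
  · rw [hverts]
    exact ⟨hne, fun u hu v hv => reachable_of_forall_adj id hreach (hconn u hu v hv)⟩
  · rw [hverts, ← ncard_edgeSet_of_isTree hT, ← Set.ncard_sdiff_singleton_add_one
      (show s(p t, p (t + 1)) ∈ T.edgeSet from hp.adj t ht) (Set.toFinite _),
      ← edgeSet_subgraph_deleteEdges]
    exact Nat.add_le_add_right (ncard_edgeSet_sup_subgraphOfAdj_le _ h) 1

/-- A path of `T` hanging off `p s`: the vertices `p 0, …, p (s - 1)` have no neighbours in `T`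
besides their neighbours on the path. -/
structure IsPendantPath {G : SimpleGraph V} (T : G.Subgraph) (p : ℕ → V) (s : ℕ) : Prop
    extends IsPathSeq T p s where
  ndegree_zero : 0 < s → ndegree T (p 0) ≤ 1
  ndegree_le_two : ∀ i, 0 < i → i < s → ndegree T (p i) ≤ 2

namespace IsPendantPath

lemma exists_eq_of_adj (h : IsPendantPath T p s) (hi : i < s) (hv : T.Adj (p i) v) :
    ∃ j ≤ i + 1, p j = v := by
  obtain rfl | h0 := Nat.eq_zero_or_pos i
  · exact ⟨1, le_rfl, eq_of_ndegree_le_one (h.ndegree_zero hi) (h.adj 0 hi) hv⟩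
  · rcases h.eq_add_one_or_add_one_eq h0 hi (h.ndegree_le_two i h0 hi) hv with rfl | rfl
    exacts [⟨i - 1, by omega, rfl⟩, ⟨i + 1, le_rfl, rfl⟩]

lemma connected_deleteVerts (h : IsPendantPath T p s) (hT : T.Connected) :
    (T.deleteVerts (p '' Set.Iio s)).Connected := by
  classical
  let f : V → V := fun v => if v ∈ p '' Set.Iio s then p s else v
  have hf : ∀ v ∉ p '' Set.Iio s, f v = v := fun v hv => if_neg hv
  have hstep : ∀ i < s, ∀ v, T.Adj (p i) v → f (p i) = f v := by
    intro i hi v hv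
    obtain ⟨j, hj, rfl⟩ := h.exists_eq_of_adj hi hv
    have hfs : ∀ j ≤ s, f (p j) = p s := by
      intro j hj
      obtain rfl | hlt := hj.eq_or_lt
      · exact if_neg h.apply_notMem_image_Iio
      · exact if_pos ⟨j, hlt, rfl⟩
    rw [hfs i hi.le, hfs j (by omega)]
  have hadj : ∀ a b, T.spanningCoe.Adj a b →
      (T.deleteVerts (p '' Set.Iio s)).spanningCoe.Reachable (f a) (f b) := by
    intro a b hab
    by_cases ha : a ∈ p '' Set.Iio s
    · obtain ⟨i, hi, rfl⟩ := ha
      rw [hstep i hi b hab]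
    by_cases hb : b ∈ p '' Set.Iio s
    · obtain ⟨i, hi, rfl⟩ := hb
      rw [hstep i hi a hab.symm]
    · rw [hf a ha, hf b hb]
      exact Adj.reachable (Subgraph.deleteVerts_adj.2 ⟨T.edge_vert hab, ha,
        T.edge_vert hab.symm, hb, hab⟩)
  obtain ⟨⟨w, hw⟩, hconn⟩ := connected_iff_reachable_spanningCoe.1 hT
  refine connected_iff_reachable_spanningCoe.2 ⟨?_, fun u hu v hv => ?_⟩
  · by_cases hs : 0 < s
    · exact ⟨p s, h.mem_verts hs le_rfl, h.apply_notMem_image_Iio⟩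
    · exact ⟨w, hw, by rintro ⟨j, hj, -⟩; exact hs (Nat.zero_lt_of_lt hj)⟩
  · have huv := reachable_of_forall_adj f hadj (hconn u hu.1 v hv.1)
    rwa [hf u hu.2, hf v hv.2] at huv

lemma isTree_deleteVerts (h : IsPendantPath T p s) (hT : T.coe.IsTree) :
    (T.deleteVerts (p '' Set.Iio s)).coe.IsTree :=
  isTree_of_le hT T.deleteVerts_le (h.connected_deleteVerts (connected_of_isTree hT))

lemma ncard_verts_deleteVerts (h : IsPendantPath T p s) :
    (T.deleteVerts (p '' Set.Iio s)).verts.ncard + s = T.verts.ncard := by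
  have hsub : p '' Set.Iio s ⊆ T.verts := by
    rintro _ ⟨j, hj, rfl⟩
    exact T.edge_vert (h.adj j hj)
  have hcard : (p '' Set.Iio s).ncard = s := by
    rw [(h.injOn.mono Set.Iio_subset_Iic_self).ncard_image,
      Set.ncard_eq_toFinset_card']
    simp
  have hsplit := Set.ncard_sdiff_add_ncard_of_subset hsub (Set.toFinite _)
  rwa [hcard] at hsplit

lemma ndegree_deleteVerts_end (h : IsPendantPath T p s) (hs : 0 < s) :
    ndegree (T.deleteVerts (p '' Set.Iio s)) (p s) + 1 = ndegree T (p s) := by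
  obtain ⟨r, rfl⟩ := Nat.exists_eq_add_one.2 hs
  have hadj : T.Adj (p (r + 1)) (p r) := (h.adj r (by omega)).symm
  have hnbr : T.neighborSet (p (r + 1)) \ p '' Set.Iio (r + 1) =
      T.neighborSet (p (r + 1)) \ {p r} := by
    ext w
    simp only [Set.mem_sdiff, Subgraph.mem_neighborSet, Set.mem_singleton_iff]
    refine and_congr_right fun hw => not_congr ⟨?_, fun he => ⟨r, Nat.lt_succ_self r, he.symm⟩⟩
    rintro ⟨j, hj, rfl⟩
    obtain ⟨i, hi, he⟩ := h.exists_eq_of_adj hj hw.symm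
    rw [Set.mem_Iio] at hj
    rw [h.eq_iff (by omega) le_rfl] at he
    rw [show j = r by omega]
  rw [ndegree, neighborSet_deleteVerts h.apply_notMem_image_Iio, hnbr]
  exact Set.ncard_sdiff_singleton_add_one hadj (Set.toFinite _)

lemma ndegree_deleteVerts_of_notMem (h : IsPendantPath T p s) (hv : v ∉ p '' Set.Iic s) :
    ndegree (T.deleteVerts (p '' Set.Iio s)) v = ndegree T v := by
  have hv' : v ∉ p '' Set.Iio s := fun hm => hv (Set.image_mono Set.Iio_subset_Iic_self hm)
  rw [ndegree, neighborSet_deleteVerts hv', sdiff_eq_left.2, ndegree]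
  rw [Set.disjoint_right]
  rintro _ ⟨j, hj, rfl⟩ hw
  obtain ⟨i, hi, rfl⟩ := h.exists_eq_of_adj hj hw.symm
  exact hv ⟨i, by rw [Set.mem_Iio] at hj; rw [Set.mem_Iic]; omega, rfl⟩

end IsPendantPath

end Surgery

section Trimming

variable [Finite V] {G : SimpleGraph V} {T : G.Subgraph} {p : ℕ → V} {n s t : ℕ}

/-- `T'` is a tree obtained from `T` by discarding `s` vertices in such a way that `x` is no longer
an end-vertex, `c` loses one neighbour, and no other vertex starts or ceases to be an end-vertex. -/
structure IsTrimming {G : SimpleGraph V} (T T' : G.Subgraph) (x c : V) (s : ℕ) : Prop where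
  isTree : T'.coe.IsTree
  ncard_verts : T'.verts.ncard + s = T.verts.ncard
  ndegree_add_one : ndegree T' c + 1 = ndegree T c
  mem_leafSet_iff : ∀ v ≠ c, v ∈ leafSet T' ↔ v ∈ leafSet T ∧ v ≠ x

lemma IsPendantPath.isTrimming (h : IsPendantPath T p s) (hT : T.coe.IsTree) (hs : 0 < s) :
    IsTrimming T (T.deleteVerts (p '' Set.Iio s)) (p 0) (p s) s where
  isTree := h.isTree_deleteVerts hT
  ncard_verts := h.ncard_verts_deleteVerts
  ndegree_add_one := h.ndegree_deleteVerts_end hs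
  mem_leafSet_iff v hv := by
    by_cases hmem : v ∈ p '' Set.Iic s
    · obtain ⟨i, hi, rfl⟩ := hmem
      rw [Set.mem_Iic] at hi
      have his : i < s := lt_of_le_of_ne hi fun e => hv (congrArg p e)
      refine iff_of_false (fun hl => hl.1.2 ⟨i, his, rfl⟩) fun hl => his.ne ?_
      exact h.eq_of_mem_leafSet (Nat.pos_of_ne_zero fun e => hl.2 (congrArg p e)) hi hl.1
    · rw [_root_.mem_leafSet_iff, _root_.mem_leafSet_iff, h.ndegree_deleteVerts_of_notMem hmem]
      exact (and_iff_left fun e => hmem ⟨0, Nat.zero_le s, e.symm⟩).symm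

lemma IsPathSeq.not_adj_of_mem_leafSet (hp : IsPathSeq T p n) (hn : p n ∈ leafSet T) (h1 : 1 < n) :
    ¬ T.Adj (p n) (p 0) := by
  obtain ⟨r, rfl⟩ := Nat.exists_eq_add_one.2 (zero_lt_one.trans h1)
  intro hadj
  have h := eq_of_ndegree_le_one (mem_leafSet_iff.1 hn).le hadj (hp.adj r (by omega)).symm
  rw [hp.eq_iff (by omega) (by omega)] at h
  omega

/-- If `p 0, …, p n` is a path in `T` whose ends are adjacent in `G`, exchange its edge
`p t — p (t + 1)` for `p n — p 0` and then cut off `p t, …, p 1`. -/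
def shortcut (T : G.Subgraph) (p : ℕ → V) (t : ℕ) (h : G.Adj (p n) (p 0)) : G.Subgraph :=
  (exchangeEdge T (p t) (p (t + 1)) h).deleteVerts ((fun i => p (t - i)) '' Set.Iio t)

section Exchange

variable (hp : IsPathSeq T p n) (hn : p n ∈ leafSet T) (h : G.Adj (p n) (p 0)) (ht : t + 1 < n)
include hp hn ht

open Classical in
lemma IsPathSeq.ndegree_exchangeEdge (v : V) :
    ndegree (exchangeEdge T (p t) (p (t + 1)) h) v + (if v = p t ∨ v = p (t + 1) then 1 else 0) =
      ndegree T v + (if v = p n ∨ v = p 0 then 1 else 0) :=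
  _root_.ndegree_exchangeEdge h (hp.adj t (by omega)) (hp.not_adj_of_mem_leafSet hn (by omega)) v

lemma IsPathSeq.ndegree_exchangeEdge_apply {i : ℕ} (hi : i ≤ n) :
    ndegree (exchangeEdge T (p t) (p (t + 1)) h) (p i) + (if i = t ∨ i = t + 1 then 1 else 0) =
      ndegree T (p i) + (if i = n ∨ i = 0 then 1 else 0) := by
  have hd := hp.ndegree_exchangeEdge hn h ht (p i)
  simp only [hp.eq_iff hi (show t ≤ n by omega), hp.eq_iff hi (show t + 1 ≤ n by omega),
    hp.eq_iff hi le_rfl, hp.eq_iff hi (Nat.zero_le n)] at hd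
  exact hd

lemma IsPathSeq.isPendantPath_exchangeEdge
    (hd : ∀ i, 0 < i → i ≤ t → ndegree T (p i) ≤ 2) :
    IsPendantPath (exchangeEdge T (p t) (p (t + 1)) h) (fun i => p (t - i)) t where
  adj i hi := by
    refine (exchangeEdge_adj h).2 (Or.inl
      ⟨(hp.reverse (i := t) (by omega) le_rfl).adj i hi, fun he => ?_⟩)
    rcases Sym2.eq_iff.1 he with ⟨h0, h1⟩ | ⟨h0, h1⟩
    all_goals
      rw [hp.eq_iff (by omega) (by omega)] at h0 h1
      omega
  injOn := (hp.reverse (i := t) (by omega) le_rfl).injOn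
  ndegree_zero h0 := by
    have hdeg := hp.ndegree_exchangeEdge_apply hn h ht (i := t) (by omega)
    rw [if_pos (Or.inl rfl), if_neg (by omega)] at hdeg
    have := hd t h0 le_rfl
    rw [Nat.sub_zero]
    omega
  ndegree_le_two i h0 hi := by
    have hdeg := hp.ndegree_exchangeEdge_apply hn h ht (i := t - i) (by omega)
    rw [if_neg (by omega), if_neg (by omega)] at hdeg
    have := hd (t - i) (by omega) (by omega)
    omega

lemma IsPathSeq.ndegree_shortcut_zero (hd : ∀ i, 0 < i → i ≤ t → ndegree T (p i) ≤ 2) :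
    ndegree (shortcut T p t h) (p 0) = ndegree T (p 0) := by
  have hdeg := hp.ndegree_exchangeEdge_apply hn h ht (Nat.zero_le n)
  rw [if_pos (Or.inr rfl)] at hdeg
  obtain rfl | h0 := Nat.eq_zero_or_pos t
  · rw [if_pos (Or.inl rfl)] at hdeg
    simpa [shortcut] using hdeg
  · have hend := (hp.isPendantPath_exchangeEdge hn h ht hd).ndegree_deleteVerts_end h0
    rw [if_neg (by omega)] at hdeg
    simp only [Nat.sub_self] at hend
    rw [shortcut]
    omega

lemma IsPathSeq.ndegree_shortcut (hd : ∀ i, 0 < i → i ≤ t → ndegree T (p i) ≤ 2) {v : V}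
    (hv : ∀ i ≤ t, v ≠ p i) :
    ndegree (shortcut T p t h) v = ndegree (exchangeEdge T (p t) (p (t + 1)) h) v := by
  refine (hp.isPendantPath_exchangeEdge hn h ht hd).ndegree_deleteVerts_of_notMem ?_
  rintro ⟨i, -, rfl⟩
  exact hv _ (Nat.sub_le t i) rfl

lemma IsPathSeq.mem_leafSet_shortcut_iff (hd : ∀ i, 0 < i → i ≤ t → ndegree T (p i) ≤ 2) {v : V}
    (hv : v ≠ p (t + 1)) : v ∈ leafSet (shortcut T p t h) ↔ v ∈ leafSet T ∧ v ≠ p n := by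
  by_cases hmem : ∃ i ≤ t, v = p i
  · obtain ⟨i, hi, rfl⟩ := hmem
    rw [and_iff_left (by rw [Ne, hp.eq_iff (by omega) le_rfl]; omega)]
    obtain rfl | h0 := Nat.eq_zero_or_pos i
    · rw [mem_leafSet_iff, mem_leafSet_iff, hp.ndegree_shortcut_zero hn h ht hd]
    · refine iff_of_false (fun hl => hl.1.2 ⟨t - i, Nat.sub_lt (by omega) h0, ?_⟩) fun hl => ?_
      · exact congrArg p (Nat.sub_sub_self hi)
      · have := hp.eq_of_mem_leafSet h0 (by omega) hl
        omega
  · push Not at hmem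
    have hdeg := hp.ndegree_exchangeEdge hn h ht v
    rw [if_neg (by simp [hmem t le_rfl, hv])] at hdeg
    rw [mem_leafSet_iff, mem_leafSet_iff, hp.ndegree_shortcut hn h ht hd hmem]
    by_cases hvn : v = p n
    · subst hvn
      rw [mem_leafSet_iff] at hn
      rw [if_pos (Or.inl rfl), hn] at hdeg
      exact iff_of_false (by omega) fun hl => hl.2 rfl
    · rw [if_neg (by simp [hmem 0 (Nat.zero_le t), hvn])] at hdeg
      rw [and_iff_left hvn]
      omega

lemma IsPathSeq.isTrimming_shortcut (hT : T.coe.IsTree)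
    (hd : ∀ i, 0 < i → i ≤ t → ndegree T (p i) ≤ 2) :
    IsTrimming T (shortcut T p t h) (p n) (p (t + 1)) t where
  isTree := (hp.isPendantPath_exchangeEdge hn h ht hd).isTree_deleteVerts
    (isTree_exchangeEdge hT hp (by omega) h)
  ncard_verts := by
    rw [shortcut, (hp.isPendantPath_exchangeEdge hn h ht hd).ncard_verts_deleteVerts, exchangeEdge,
      verts_sup_subgraphOfAdj_s5 h]
    exacts [rfl, hn.1, hp.mem_verts (by omega) (Nat.zero_le n)]
  ndegree_add_one := by
    have hdeg := hp.ndegree_exchangeEdge_apply hn h ht ht.le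
    rw [if_pos (Or.inr rfl), if_neg (by omega)] at hdeg
    rw [hp.ndegree_shortcut hn h ht hd fun i hi => by
      rw [Ne, hp.eq_iff (by omega) (by omega)]; omega]
    exact hdeg
  mem_leafSet_iff _ hv := hp.mem_leafSet_shortcut_iff hn h ht hd hv

end Exchange

end Trimming

section Closing

variable [Finite V] {G : SimpleGraph V} {T : G.Subgraph} {p : ℕ → V} {n k t : ℕ} {x y : V}

lemma IsPathSeq.ncard_leafSet_exchangeEdge_lt (hp : IsPathSeq T p n) (h0 : p 0 ∈ leafSet T)
    (hn : p n ∈ leafSet T) (h : G.Adj (p n) (p 0)) (ht : t + 1 < n)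
    (h3 : 3 ≤ ndegree T (p (t + 1))) :
    (leafSet (exchangeEdge T (p t) (p (t + 1)) h)).ncard < (leafSet T).ncard := by
  have hsub : leafSet (exchangeEdge T (p t) (p (t + 1)) h) ⊆
      insert (p t) (leafSet T \ {p n, p 0}) := by
    intro v hv
    rw [mem_leafSet_iff] at hv h0 hn
    have hdeg := hp.ndegree_exchangeEdge (mem_leafSet_iff.2 hn) h ht v
    by_cases hvt : v = p t
    · exact Or.inl hvt
    have hvt' : v ≠ p (t + 1) := by
      rintro rfl
      rw [if_pos (Or.inr rfl)] at hdeg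
      omega
    have hends : ¬ (v = p n ∨ v = p 0) := by
      rintro (rfl | rfl)
      all_goals
        rw [if_neg (not_or.2 ⟨hvt, hvt'⟩), if_pos (by simp only [true_or, or_true])] at hdeg
        omega
    rw [if_neg (not_or.2 ⟨hvt, hvt'⟩), if_neg hends] at hdeg
    exact Or.inr ⟨mem_leafSet_iff.2 (by omega), hends⟩
  have hpair : ({p n, p 0} : Set V).ncard = 2 :=
    Set.ncard_pair (by rw [Ne, hp.eq_iff le_rfl (Nat.zero_le n)]; omega)
  have hsplit := Set.ncard_sdiff_add_ncard_of_subset (Set.pair_subset hn h0) (Set.toFinite _)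
  have hcard := (Set.ncard_le_ncard hsub (Set.toFinite _)).trans (Set.ncard_insert_le _ _)
  omega

lemma IsPathSeq.verts_subset_image (hp : IsPathSeq T p n) (hT : T.Connected) (hpos : 0 < n)
    (h0 : p 0 ∈ leafSet T) (hn : p n ∈ leafSet T)
    (hd : ∀ i, 0 < i → i < n → ndegree T (p i) ≤ 2) : T.verts ⊆ p '' Set.Iic n := by
  refine verts_subset_of_adj_closed hT ⟨0, Nat.zero_le n, rfl⟩ h0.1 ?_
  rintro _ ⟨i, hi, rfl⟩ c hc
  rw [Set.mem_Iic] at hi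
  obtain rfl | hi0 := Nat.eq_zero_or_pos i
  · exact ⟨1, hpos, eq_of_ndegree_le_one h0.2.le (hp.adj 0 hpos) hc⟩
  obtain rfl | hlt := hi.eq_or_lt
  · obtain ⟨r, rfl⟩ := Nat.exists_eq_add_one.2 hpos
    exact ⟨r, Nat.le_succ r, eq_of_ndegree_le_one hn.2.le (hp.adj r (by omega)).symm hc⟩
  · rcases hp.eq_add_one_or_add_one_eq hi0 hlt (hd i hi0 hlt) hc with rfl | rfl
    exacts [⟨i - 1, by rw [Set.mem_Iic]; omega, rfl⟩, ⟨i + 1, hlt, rfl⟩]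

lemma IsPathSeq.isCycleSubgraph_sup_subgraphOfAdj (hp : IsPathSeq T p n) (hT : T.Connected)
    (hpos : 0 < n) (h0 : p 0 ∈ leafSet T) (hn : p n ∈ leafSet T)
    (hd : ∀ i, 0 < i → i < n → ndegree T (p i) ≤ 2) (h : G.Adj (p n) (p 0)) :
    IsCycleSubgraph (T ⊔ G.subgraphOfAdj h) := by
  have hsub := hp.verts_subset_image hT hpos h0 hn hd
  refine ⟨Subgraph.connected_sup hT.preconnected (Subgraph.subgraphOfAdj_connected h).preconnected
    ⟨p n, hn.1, Or.inl rfl⟩, ?_⟩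
  rw [verts_sup_subgraphOfAdj_s5 h hn.1 h0.1]
  obtain rfl | h1 : n = 1 ∨ 1 < n := by omega
  · refine Or.inl ((Set.ncard_le_ncard hsub (Set.toFinite _)).trans
      ((Set.ncard_image_le (Set.toFinite _)).trans ?_))
    rw [Set.ncard_eq_toFinset_card']
    simp
  · refine Or.inr fun v hv => ?_
    obtain ⟨i, hi, rfl⟩ := hsub hv
    rw [Set.mem_Iic] at hi
    have hdeg := ndegree_sup_subgraphOfAdj h (hp.not_adj_of_mem_leafSet hn h1) (p i)
    simp only [hp.eq_iff hi le_rfl, hp.eq_iff hi (Nat.zero_le n)] at hdeg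
    rw [← ndegree, hdeg]
    split_ifs with hend
    · rcases hend with rfl | rfl
      exacts [congrArg (· + 1) hn.2, congrArg (· + 1) h0.2]
    · exact (hd i (by omega) (by omega)).antisymm (hp.two_le_ndegree (by omega) (by omega))

lemma exists_isKEndedTree_of_adj (hT : T.coe.IsTree) (hk : 1 ≤ k)
    (hl : (leafSet T).ncard ≤ k + 1) (hx : x ∈ leafSet T) (hy : y ∈ leafSet T)
    (h : G.Adj x y) : ∃ T' : G.Subgraph, IsKEndedTree G k T' ∧ T'.verts = T.verts := by
  have hr := (connected_iff_reachable_spanningCoe.1 (connected_of_isTree hT)).2 y hy.1 x hx.1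
  obtain ⟨p, n, hp, rfl, rfl⟩ : ∃ p n, IsPathSeq T p n ∧ p 0 = y ∧ p n = x :=
    ⟨_, _, isPathSeq_geodesic hr, geodesic_zero, geodesic_dist hr⟩
  have hpos : 0 < n := Nat.pos_of_ne_zero fun h0 => h.ne (by rw [h0])
  by_cases hd : ∀ i, 0 < i → i < n → ndegree T (p i) ≤ 2
  · exact ⟨_, Or.inr ⟨hk, hp.isCycleSubgraph_sup_subgraphOfAdj (connected_of_isTree hT) hpos hy hx
      hd h⟩, verts_sup_subgraphOfAdj_s5 h hx.1 hy.1⟩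
  · push Not at hd
    obtain ⟨i, hi, hin, h3⟩ := hd
    obtain ⟨t, rfl⟩ := Nat.exists_eq_add_one.2 hi
    have hlt := hp.ncard_leafSet_exchangeEdge_lt hy hx h hin h3
    exact ⟨_, Or.inl ⟨isTree_exchangeEdge hT hp (by omega) h, Nat.le_of_lt_succ (hlt.trans_le hl)⟩,
      verts_sup_subgraphOfAdj_s5 h hx.1 hy.1⟩

end Closing

/-! ### Extremal trees -/

section Extremal

variable {G : SimpleGraph V} {T T' : G.Subgraph} {p q : ℕ → V} {k l n s t : ℕ} {x y c u : V}

/-- `T` is a largest `(k + 1)`-ended tree, has exactly `k + 1` end-vertices, and is larger than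
every `k`-ended tree by at least `l`. -/
structure IsExtremal {G : SimpleGraph V} (k l : ℕ) (T : G.Subgraph) : Prop where
  one_le_ends : 1 ≤ k
  one_le_gap : 1 ≤ l
  isTree : T.coe.IsTree
  ncard_leafSet : (leafSet T).ncard = k + 1
  ncard_verts_le : ∀ T' : G.Subgraph, IsKEndedTree G (k + 1) T' → T'.verts.ncard ≤ T.verts.ncard
  ncard_verts_add_le : ∀ T' : G.Subgraph, IsKEndedTree G k T' → T'.verts.ncard + l ≤ T.verts.ncard

/-- The vertex `c` is a branch vertex of `T`, or a neighbour in `G` of an end-vertex of `T` other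
than `x`. Such a `c` stops `T` from being trimmed cheaply at the end-vertex `x` down to `c`. -/
def IsObstacle {G : SimpleGraph V} (T : G.Subgraph) (x c : V) : Prop :=
  3 ≤ ndegree T c ∨ ∃ z ∈ leafSet T, z ≠ x ∧ G.Adj z c

lemma ndegree_le_two_of_not_isObstacle (h : ¬ IsObstacle T x c) : ndegree T c ≤ 2 :=
  Nat.le_of_lt_succ (not_le.1 fun h3 => h (Or.inl h3))

namespace IsExtremal

variable [Finite V]

lemma ncard_leafSet_le_of_subset_insert (hE : IsExtremal k l T) (hx : x ∈ leafSet T)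
    (hsub : leafSet T' ⊆ insert c (leafSet T \ {x})) : (leafSet T').ncard ≤ k + 1 := by
  have hcard := (Set.ncard_le_ncard hsub (Set.toFinite _)).trans (Set.ncard_insert_le _ _)
  rwa [Set.ncard_sdiff_singleton_add_one hx (Set.toFinite _), hE.ncard_leafSet] at hcard

lemma ncard_verts_add_le_of_leafSet_subset (hE : IsExtremal k l T) (hT' : T'.coe.IsTree)
    (hx : x ∈ leafSet T) (hsub : leafSet T' ⊆ leafSet T \ {x}) :
    T'.verts.ncard + l ≤ T.verts.ncard := by
  have hcard := Set.ncard_le_ncard hsub (Set.toFinite _)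
  have hsplit := Set.ncard_sdiff_singleton_add_one hx (Set.toFinite _)
  rw [hE.ncard_leafSet] at hsplit
  exact hE.ncard_verts_add_le T' (Or.inl ⟨hT', (by omega : (leafSet T').ncard ≤ k)⟩)

lemma mem_verts_of_adj (hE : IsExtremal k l T) (hx : x ∈ leafSet T) (h : G.Adj x u) :
    u ∈ T.verts := by
  by_contra hu
  have hT' := isTree_sup_subgraphOfAdj hE.isTree hx.1 hu h
  have hsub : leafSet (T ⊔ G.subgraphOfAdj h) ⊆ insert u (leafSet T \ {x}) := by
    intro v hv
    have hdeg := ndegree_sup_subgraphOfAdj h (fun ha => hu (T.edge_vert ha.symm)) v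
    rw [mem_leafSet_iff.1 hv] at hdeg
    by_cases hvu : v = u
    · exact Or.inl hvu
    have hvx : v ≠ x := by
      rintro rfl
      rw [if_pos (Or.inl rfl), mem_leafSet_iff.1 hx] at hdeg
      omega
    rw [if_neg (not_or.2 ⟨hvx, hvu⟩)] at hdeg
    exact Or.inr ⟨mem_leafSet_iff.2 hdeg.symm, hvx⟩
  have hle := hE.ncard_verts_le _ (Or.inl ⟨hT', hE.ncard_leafSet_le_of_subset_insert hx hsub⟩)
  have hlt := Set.ncard_lt_ncard (Set.ssubset_iff_of_subset Set.subset_union_left |>.2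
    ⟨u, Or.inr (Or.inr rfl), hu⟩ : T.verts ⊂ (T ⊔ G.subgraphOfAdj h).verts) (Set.toFinite _)
  exact hlt.not_ge hle

lemma not_adj (hE : IsExtremal k l T) (hx : x ∈ leafSet T) (hy : y ∈ leafSet T) :
    ¬ G.Adj x y := by
  intro h
  obtain ⟨T', hT', hverts⟩ :=
    exists_isKEndedTree_of_adj hE.isTree hE.one_le_ends hE.ncard_leafSet.le hx hy h
  have hle := hE.ncard_verts_add_le T' hT'
  rw [hverts] at hle
  have := hE.one_le_gap
  omega

lemma le_of_isTrimming (hE : IsExtremal k l T) (hx : x ∈ leafSet T) (h : IsTrimming T T' x c s)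
    (hc : IsObstacle T x c) : l ≤ s := by
  have hsub : leafSet T' ⊆ insert c (leafSet T \ {x}) := fun v hv =>
    or_iff_not_imp_left.2 fun hvc => (h.mem_leafSet_iff v hvc).1 hv
  suffices hle : T'.verts.ncard + l ≤ T.verts.ncard by
    rw [← h.ncard_verts] at hle
    omega
  have hdeg := h.ndegree_add_one
  rcases hc with h3 | ⟨z, hz, hzx, hzc⟩
  · refine hE.ncard_verts_add_le_of_leafSet_subset h.isTree hx fun v hv =>
      (hsub hv).resolve_left ?_
    rintro rfl
    rw [mem_leafSet_iff.1 hv] at hdeg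
    omega
  by_cases hcl : c ∈ leafSet T'
  · obtain ⟨T'', hT'', hverts⟩ := exists_isKEndedTree_of_adj h.isTree hE.one_le_ends
      (hE.ncard_leafSet_le_of_subset_insert hx hsub)
      ((h.mem_leafSet_iff z hzc.ne).2 ⟨hz, hzx⟩) hcl hzc
    exact hverts ▸ hE.ncard_verts_add_le T'' hT''
  · exact hE.ncard_verts_add_le_of_leafSet_subset h.isTree hx fun v hv =>
      (hsub hv).resolve_left fun hvc => hcl (hvc ▸ hv)

lemma not_isObstacle_of_mem_leafSet (hE : IsExtremal k l T) (hc : c ∈ leafSet T) :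
    ¬ IsObstacle T x c := by
  rintro (h3 | ⟨z, hz, -, hzc⟩)
  · rw [mem_leafSet_iff.1 hc] at h3
    omega
  · exact hE.not_adj hz hc hzc

lemma not_isObstacle_of_adj (hE : IsExtremal k l T) (hp : IsPathSeq T p n) (hn : p n ∈ leafSet T)
    (h : G.Adj (p n) (p 0)) (h0 : 0 < t) (htl : t ≤ l) (htn : t ≤ n) :
    ¬ IsObstacle T (p n) (p t) := by
  induction t using Nat.strong_induction_on with
  | _ t ih =>
    obtain rfl | hlt := htn.eq_or_lt
    · exact hE.not_isObstacle_of_mem_leafSet hn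
    obtain ⟨r, rfl⟩ := Nat.exists_eq_add_one.2 h0
    intro hobs
    have hle := hE.le_of_isTrimming hn (hp.isTrimming_shortcut hn h hlt hE.isTree fun i hi hir =>
      ndegree_le_two_of_not_isObstacle (ih i (by omega) hi (by omega) (by omega))) hobs
    omega

lemma not_isObstacle_of_lt (hE : IsExtremal k l T) (hq : IsPathSeq T q n) (h0 : q 0 ∈ leafSet T)
    (htl : t < l) (htn : t ≤ n) : ¬ IsObstacle T (q 0) (q t) := by
  induction t using Nat.strong_induction_on with
  | _ t ih =>
    obtain rfl | hpos := Nat.eq_zero_or_pos t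
    · exact hE.not_isObstacle_of_mem_leafSet h0
    intro hobs
    have hpend : IsPendantPath T q t :=
      { hq.mono htn with
        ndegree_zero := fun _ => h0.2.le
        ndegree_le_two := fun i _ hi =>
          ndegree_le_two_of_not_isObstacle (ih i hi (by omega) (by omega)) }
    exact htl.not_ge (hE.le_of_isTrimming h0 (hpend.isTrimming hE.isTree hpos) hobs)

lemma le_of_isPathSeq (hE : IsExtremal k l T) (hq : IsPathSeq T q n) (hpos : 0 < n)
    (h0 : q 0 ∈ leafSet T) (hn : q n ∈ leafSet T) : l ≤ n := by
  by_contra! hlt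
  have hpend : IsPendantPath T q n :=
    { hq with
      ndegree_zero := fun _ => h0.2.le
      ndegree_le_two := fun i _ hi =>
        ndegree_le_two_of_not_isObstacle (hE.not_isObstacle_of_lt hq h0 (by omega) hi.le) }
  have htrim := hpend.isTrimming hE.isTree hpos
  have hle := hE.ncard_verts_add_le_of_leafSet_subset htrim.isTree h0 fun v hv =>
    (htrim.mem_leafSet_iff v ?_).1 hv
  · rw [← htrim.ncard_verts] at hle
    omega
  · rintro rfl
    have hdeg := htrim.ndegree_add_one
    rw [mem_leafSet_iff.1 hv, mem_leafSet_iff.1 hn] at hdeg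
    omega

end IsExtremal

end Extremal

/-! ### Charging edges -/

section Direction

open scoped Finset

variable {G : SimpleGraph V} {T : G.Subgraph} {k l i : ℕ} {C : Finset V} {u x z : V}

open Classical in
/-- The vertices of `C` adjacent to `u` in `G` towards which the tree `T` is left from `u` by the
same edge as towards `x`. -/
noncomputable def sameDirection {G : SimpleGraph V} (T : G.Subgraph) (C : Finset V) (u x : V) :
    Finset V :=
  {z ∈ C | G.Adj z u ∧ geodesic T u z 1 = geodesic T u x 1}

lemma mem_sameDirection : z ∈ sameDirection T C u x ↔
    z ∈ C ∧ G.Adj z u ∧ geodesic T u z 1 = geodesic T u x 1 := by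
  simp [sameDirection]

lemma sameDirection_subset : sameDirection T C u x ⊆ C :=
  fun _ hz => (mem_sameDirection.1 hz).1

namespace IsExtremal

lemma reachable (hE : IsExtremal k l T) (hx : x ∈ leafSet T) (hu : u ∈ T.verts) :
    T.spanningCoe.Reachable u x :=
  (connected_iff_reachable_spanningCoe.1 (connected_of_isTree hE.isTree)).2 u hu x hx.1

variable [Finite V]

lemma reachable_of_adj (hE : IsExtremal k l T) (hx : x ∈ leafSet T) (hxu : G.Adj x u) :
    T.spanningCoe.Reachable u x :=
  hE.reachable hx (hE.mem_verts_of_adj hx hxu)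

lemma not_isObstacle_geodesic (hE : IsExtremal k l T) (hx : x ∈ leafSet T) (hxu : G.Adj x u)
    (h0 : 0 < i) (hil : i ≤ l) (hi : i ≤ T.spanningCoe.dist u x) :
    ¬ IsObstacle T x (geodesic T u x i) := by
  have hr := hE.reachable_of_adj hx hxu
  have hend := geodesic_dist hr
  have hobs := hE.not_isObstacle_of_adj (isPathSeq_geodesic hr) (by rwa [hend])
    (by rwa [hend, geodesic_zero]) h0 hil hi
  rwa [hend] at hobs

lemma geodesic_eq_of_same_direction (hE : IsExtremal k l T) (hx : x ∈ leafSet T)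
    (hz : z ∈ leafSet T) (hxu : G.Adj x u) (hzu : G.Adj z u)
    (h1 : geodesic T u x 1 = geodesic T u z 1) (hil : i ≤ l + 1)
    (hix : i ≤ T.spanningCoe.dist u x) (hiz : i ≤ T.spanningCoe.dist u z) :
    geodesic T u x i = geodesic T u z i :=
  ((isPathSeq_geodesic (hE.reachable_of_adj hx hxu)).mono hix).eq_of_ndegree_le_two
    ((isPathSeq_geodesic (hE.reachable_of_adj hz hzu)).mono hiz) (by simp only [geodesic_zero]) h1
    (fun _ hj hji => ndegree_le_two_of_not_isObstacle
      (hE.not_isObstacle_geodesic hx hxu hj (by omega) (by omega))) le_rfl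

lemma dist_pos (hE : IsExtremal k l T) (hx : x ∈ leafSet T) (hxu : G.Adj x u) :
    0 < T.spanningCoe.dist u x :=
  (hE.reachable_of_adj hx hxu).pos_dist_of_ne hxu.ne'

lemma lt_dist_of_same_direction (hE : IsExtremal k l T) (hx : x ∈ leafSet T)
    (hz : z ∈ leafSet T) (hxz : x ≠ z) (hxu : G.Adj x u) (hzu : G.Adj z u)
    (h1 : geodesic T u x 1 = geodesic T u z 1) : l < T.spanningCoe.dist u x := by
  have hrx := hE.reachable_of_adj hx hxu
  have hrz := hE.reachable_of_adj hz hzu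
  by_contra! hle
  rcases le_total (T.spanningCoe.dist u x) (T.spanningCoe.dist u z) with hxz' | hzx'
  · have he := hE.geodesic_eq_of_same_direction hx hz hxu hzu h1 (by omega) le_rfl hxz'
    rw [geodesic_dist hrx] at he
    have hd := (isPathSeq_geodesic hrz).eq_of_mem_leafSet (hE.dist_pos hx hxu) hxz' (by rwa [← he])
    rw [hd, geodesic_dist hrz] at he
    exact hxz he
  · have he := hE.geodesic_eq_of_same_direction hx hz hxu hzu h1 (by omega) hzx' le_rfl
    rw [geodesic_dist hrz] at he
    have hd := (isPathSeq_geodesic hrx).eq_of_mem_leafSet (hE.dist_pos hz hzu) hzx' (by rwa [he])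
    rw [hd, geodesic_dist hrx] at he
    exact hxz he

lemma geodesic_eq_of_mem_sameDirection (hE : IsExtremal k l T) (hCl : ↑C ⊆ leafSet T) (hx : x ∈ C)
    (hxu : G.Adj x u) (hz : z ∈ sameDirection T C u x) (hil : i ≤ l)
    (hi : i < T.spanningCoe.dist u x) : i < T.spanningCoe.dist u z ∧
      geodesic T u z i = geodesic T u x i ∧ geodesic T u z (i + 1) = geodesic T u x (i + 1) := by
  obtain ⟨hzC, hzu, h1⟩ := mem_sameDirection.1 hz
  obtain rfl | hne := eq_or_ne z x
  · exact ⟨hi, rfl, rfl⟩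
  have hlt := hE.lt_dist_of_same_direction (hCl hzC) (hCl hx) hne hzu hxu h1
  have heq := fun j hj hjz => hE.geodesic_eq_of_same_direction (i := j) (hCl hzC) (hCl hx) hzu hxu
    h1 hj hjz
  exact ⟨by omega, heq i (by omega) (by omega) (by omega),
    heq (i + 1) (by omega) (by omega) (by omega)⟩

lemma dist_geodesic_eq_add_one (hE : IsExtremal k l T) (hCl : ↑C ⊆ leafSet T) (hx : x ∈ C)
    (hxu : G.Adj x u) (hz : z ∈ sameDirection T C u x) (hil : i ≤ l)
    (hi : i < T.spanningCoe.dist u x) : T.spanningCoe.dist (geodesic T u x i) z =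
      T.spanningCoe.dist (geodesic T u x (i + 1)) z + 1 := by
  obtain ⟨hiz, h0, h1⟩ := hE.geodesic_eq_of_mem_sameDirection hCl hx hxu hz hil hi
  obtain ⟨hzC, hzu, -⟩ := mem_sameDirection.1 hz
  have hr := hE.reachable_of_adj (hCl hzC) hzu
  rw [← h0, ← h1, dist_geodesic hr hiz.le, dist_geodesic hr hiz]
  omega

end IsExtremal

end Direction

section Rank

open scoped Finset

variable [LinearOrder V] {G : SimpleGraph V} {T : G.Subgraph} {k l i : ℕ} {C : Finset V}
  {u x x' y z : V}

/-- The number of vertices preceding `x` in `sameDirection T C u x`. The edges of `G` from these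
vertices to `u` are charged to the first edges of `T` in this direction, in the order of their
ranks. -/
noncomputable def directionRank {G : SimpleGraph V} (T : G.Subgraph) (C : Finset V) (u x : V) : ℕ :=
  #{z ∈ sameDirection T C u x | z < x}

lemma directionRank_lt_card (hx : x ∈ C) (hxu : G.Adj x u) :
    directionRank T C u x < #(sameDirection T C u x) :=
  Finset.card_lt_card (Finset.filter_ssubset.2
    ⟨x, mem_sameDirection.2 ⟨hx, hxu, rfl⟩, lt_irrefl x⟩)

lemma directionRank_le (hC : #C ≤ l + 1) (hx : x ∈ C) (hxu : G.Adj x u) :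
    directionRank T C u x ≤ l :=
  Nat.le_of_lt_succ ((directionRank_lt_card hx hxu).trans_le
    ((Finset.card_le_card sameDirection_subset).trans hC))

lemma exists_mem_sameDirection_ne (h : 0 < directionRank T C u x) :
    ∃ z ∈ sameDirection T C u x, z ≠ x := by
  obtain ⟨z, hz⟩ := Finset.card_pos.1 h
  rw [Finset.mem_filter] at hz
  exact ⟨z, hz.1, hz.2.ne⟩

lemma directionRank_lt_of_lt (hx : x ∈ C) (hxu : G.Adj x u)
    (h1 : geodesic T u x 1 = geodesic T u x' 1) (hlt : x < x') :
    directionRank T C u x < directionRank T C u x' := by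
  have hsame : sameDirection T C u x = sameDirection T C u x' := by
    ext z
    rw [mem_sameDirection, mem_sameDirection, h1]
  rw [directionRank, directionRank, hsame]
  refine Finset.card_lt_card (Finset.ssubset_iff_of_subset
    (Finset.monotone_filter_right _ fun _ _ hz => hz.trans hlt) |>.2 ⟨x, ?_, ?_⟩)
  · exact Finset.mem_filter.2 ⟨mem_sameDirection.2 ⟨hx, hxu, h1⟩, hlt⟩
  · simp only [Finset.mem_filter, lt_self_iff_false, and_false, not_false_eq_true]

lemma eq_of_directionRank_eq (hx : x ∈ C) (hxu : G.Adj x u) (hx' : x' ∈ C) (hxu' : G.Adj x' u)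
    (h1 : geodesic T u x 1 = geodesic T u x' 1)
    (h : directionRank T C u x = directionRank T C u x') : x = x' := by
  rcases lt_trichotomy x x' with hlt | heq | hgt
  · exact absurd h (directionRank_lt_of_lt hx hxu h1 hlt).ne
  · exact heq
  · exact absurd h (directionRank_lt_of_lt hx' hxu' h1.symm hgt).ne'

namespace IsExtremal

variable [Finite V] (hE : IsExtremal k l T) (hCl : ↑C ⊆ leafSet T) (hC : #C ≤ l + 1) (hx : x ∈ C)
  (hxu : G.Adj x u)
include hE hCl hC hx hxu

lemma directionRank_lt_dist : directionRank T C u x < T.spanningCoe.dist u x := by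
  obtain h0 | hpos := Nat.eq_zero_or_pos (directionRank T C u x)
  · rw [h0]
    exact hE.dist_pos (hCl hx) hxu
  · obtain ⟨z, hz, hzx⟩ := exists_mem_sameDirection_ne hpos
    obtain ⟨hzC, hzu, h1⟩ := mem_sameDirection.1 hz
    exact (directionRank_le hC hx hxu).trans_lt
      (hE.lt_dist_of_same_direction (hCl hx) (hCl hzC) hzx.symm hxu hzu h1.symm)

lemma ndegree_geodesic_le_two (h0 : 0 < i) (hi : i ≤ directionRank T C u x) :
    ndegree T (geodesic T u x i) ≤ 2 :=
  ndegree_le_two_of_not_isObstacle (hE.not_isObstacle_geodesic (hCl hx) hxu h0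
    (hi.trans (directionRank_le hC hx hxu)) (hi.trans (hE.directionRank_lt_dist hCl hC hx hxu).le))

lemma not_adj_geodesic (hy : y ∈ leafSet T) (h0 : 0 < i) (hi : i ≤ directionRank T C u x) :
    ¬ G.Adj y (geodesic T u x i) := by
  intro hadj
  have hil := hi.trans (directionRank_le hC hx hxu)
  have hid := hi.trans_lt (hE.directionRank_lt_dist hCl hC hx hxu)
  have hobs : ∀ z ∈ sameDirection T C u x, z = y := by
    intro z hz
    by_contra hne
    obtain ⟨hiz, heq, -⟩ := hE.geodesic_eq_of_mem_sameDirection hCl hx hxu hz hil hid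
    obtain ⟨hzC, hzu, -⟩ := mem_sameDirection.1 hz
    exact hE.not_isObstacle_geodesic (hCl hzC) hzu h0 hil hiz.le
      (Or.inr ⟨y, hy, Ne.symm hne, heq ▸ hadj⟩)
  obtain ⟨z, hz, hzx⟩ := exists_mem_sameDirection_ne (h0.trans_le hi)
  exact hzx ((hobs z hz).trans (hobs x (mem_sameDirection.2 ⟨hx, hxu, rfl⟩)).symm)

end IsExtremal

end Rank

section PendantEdge

variable {G : SimpleGraph V} {T : G.Subgraph} {k l i t t' : ℕ} {x y y' z : V}

/-- The `t`-th edge of the path of `T` from `y` to `z`. -/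
noncomputable def pathEdge {G : SimpleGraph V} (T : G.Subgraph) (y z : V) (t : ℕ) : Sym2 V :=
  s(geodesic T y z t, geodesic T y z (t + 1))

namespace IsExtremal

variable [Finite V] (hE : IsExtremal k l T) (hz : z ∈ leafSet T) (hy : y ∈ leafSet T) (hyz : y ≠ z)
include hE hz hy hyz

lemma le_dist : l ≤ T.spanningCoe.dist y z := by
  have hr := hE.reachable hz hy.1
  exact hE.le_of_isPathSeq (isPathSeq_geodesic hr) (hr.pos_dist_of_ne hyz)
    (by rwa [geodesic_zero]) (by rwa [geodesic_dist hr])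

lemma not_isObstacle_geodesic_of_lt (ht : t < l) : ¬ IsObstacle T y (geodesic T y z t) := by
  have hobs := hE.not_isObstacle_of_lt (isPathSeq_geodesic (hE.reachable hz hy.1))
    (by rwa [geodesic_zero]) ht (ht.le.trans (hE.le_dist hz hy hyz))
  rwa [geodesic_zero] at hobs

lemma ndegree_geodesic_le_two_of_lt (ht : t < l) : ndegree T (geodesic T y z t) ≤ 2 :=
  ndegree_le_two_of_not_isObstacle (hE.not_isObstacle_geodesic_of_lt hz hy hyz ht)

lemma eq_zero_of_geodesic_mem_leafSet (ht : t < l) (h : geodesic T y z t ∈ leafSet T) : t = 0 := by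
  by_contra h0
  have hle := hE.le_dist hz hy hyz
  have := (isPathSeq_geodesic (hE.reachable hz hy.1)).eq_of_mem_leafSet (Nat.pos_of_ne_zero h0)
    (ht.le.trans hle) h
  omega

lemma eq_of_geodesic_eq_sub_add (hy' : y' ∈ leafSet T) (ht' : t' < l) (htt' : t ≤ t')
    (h : ∀ i ≤ t + 1, geodesic T y' z i = geodesic T y z (t' - t + i)) : y' = y ∧ t = t' := by
  have h0 : y' = geodesic T y z (t' - t) := by
    simpa only [geodesic_zero, add_zero] using h 0 (Nat.zero_le _)
  have hsub := hE.eq_zero_of_geodesic_mem_leafSet hz hy hyz (by omega) (h0 ▸ hy')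
  rw [hsub, geodesic_zero] at h0
  exact ⟨h0, by omega⟩

lemma eq_of_pathEdge_eq (hy' : y' ∈ leafSet T) (hy'z : y' ≠ z) (ht : t < l) (ht' : t' < l)
    (he : pathEdge T y z t = pathEdge T y' z t') : y = y' ∧ t = t' := by
  have hr := hE.reachable hz hy.1
  have hr' := hE.reachable hz hy'.1
  have hp := isPathSeq_geodesic hr
  rcases hp.edge_eq_cases (isPathSeq_geodesic hr') (ht.trans_le (hE.le_dist hz hy hyz))
    (ht'.trans_le (hE.le_dist hz hy' hy'z)) (by rwa [geodesic_dist hr])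
    (fun j _ hj => hE.ndegree_geodesic_le_two_of_lt hz hy hyz (hj.trans_lt ht))
    (fun j _ hj => hE.ndegree_geodesic_le_two_of_lt hz hy' hy'z (hj.trans_lt ht')) he with
    ⟨hle, h⟩ | ⟨hle, h⟩ | ⟨hle, h, -⟩
  · exact hE.eq_of_geodesic_eq_sub_add hz hy' hy'z hy ht' hle h
  · exact (hE.eq_of_geodesic_eq_sub_add hz hy hyz hy' ht hle h).imp Eq.symm Eq.symm
  · rw [geodesic_zero] at h
    have hend := hp.eq_of_mem_leafSet (by omega) hle (h ▸ hy')
    rw [hend, geodesic_dist hr] at h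
    exact (hy'z h).elim

end IsExtremal

end PendantEdge

section DirectionEdge

open scoped Finset

variable [LinearOrder V] {G : SimpleGraph V} {T : G.Subgraph} {k l t : ℕ} {C : Finset V}
  {u u' x x' y z : V}

/-- The edge of `T` to which the edge of `G` from `x ∈ C` to `u` is charged. -/
noncomputable def directionEdge {G : SimpleGraph V} (T : G.Subgraph) (C : Finset V) (u x : V) :
    Sym2 V :=
  pathEdge T u x (directionRank T C u x)

namespace IsExtremal

variable [Finite V] (hE : IsExtremal k l T) (hCl : ↑C ⊆ leafSet T) (hC : #C ≤ l + 1) (hx : x ∈ C)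
  (hxu : G.Adj x u)
include hE hCl hC hx hxu

lemma disjoint_sameDirection (hx' : x' ∈ C) (hxu' : G.Adj x' u')
    (h : geodesic T u x (directionRank T C u x) = geodesic T u' x' (directionRank T C u' x' + 1))
    (h' : geodesic T u x (directionRank T C u x + 1) = geodesic T u' x' (directionRank T C u' x')) :
    Disjoint (sameDirection T C u x) (sameDirection T C u' x') := by
  refine Finset.disjoint_left.2 fun w hw hw' => ?_
  have hd := hE.dist_geodesic_eq_add_one hCl hx hxu hw (directionRank_le hC hx hxu)
    (hE.directionRank_lt_dist hCl hC hx hxu)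
  have hd' := hE.dist_geodesic_eq_add_one hCl hx' hxu' hw' (directionRank_le hC hx' hxu')
    (hE.directionRank_lt_dist hCl hC hx' hxu')
  rw [← h, ← h'] at hd'
  omega

lemma not_directionEdge_opposite (hx' : x' ∈ C) (hxu' : G.Adj x' u')
    (hle : directionRank T C u x + 1 + directionRank T C u' x' ≤ T.spanningCoe.dist u x)
    (h0 : u' = geodesic T u x (directionRank T C u x + 1 + directionRank T C u' x'))
    (h : geodesic T u x (directionRank T C u x) = geodesic T u' x' (directionRank T C u' x' + 1)) :
    geodesic T u x (directionRank T C u x + 1) ≠ geodesic T u' x' (directionRank T C u' x') := by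
  intro h'
  have hdisj := hE.disjoint_sameDirection hCl hC hx hxu hx' hxu' h h'
  have hne : x' ≠ x := by
    rintro rfl
    exact Finset.disjoint_left.1 hdisj (mem_sameDirection.2 ⟨hx, hxu, rfl⟩)
      (mem_sameDirection.2 ⟨hx, hxu', rfl⟩)
  have hcard : #(sameDirection T C u x) + #(sameDirection T C u' x') ≤ #C := by
    rw [← Finset.card_union_of_disjoint hdisj]
    exact Finset.card_le_card (Finset.union_subset sameDirection_subset sameDirection_subset)
  have hlt := directionRank_lt_card (T := T) hx hxu
  have hlt' := directionRank_lt_card (T := T) hx' hxu'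
  exact hE.not_isObstacle_geodesic (hCl hx) hxu (by omega) (by omega) hle
    (Or.inr ⟨x', hCl hx', hne, h0 ▸ hxu'⟩)

lemma eq_of_geodesic_directionRank_eq_sub_add (hx' : x' ∈ C) (hxu' : G.Adj x' u')
    (hle : directionRank T C u' x' ≤ directionRank T C u x)
    (h : ∀ i ≤ directionRank T C u' x' + 1, geodesic T u' x' i =
      geodesic T u x (directionRank T C u x - directionRank T C u' x' + i)) :
    x' = x ∧ u' = u := by
  have h0 : u' = geodesic T u x (directionRank T C u x - directionRank T C u' x') := by
    simpa only [geodesic_zero, add_zero] using h 0 (Nat.zero_le _)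
  obtain heq | hlt := hle.eq_or_lt
  · rw [heq, Nat.sub_self, geodesic_zero] at h0
    subst h0
    have h1 := h 1 (by omega)
    rw [heq, Nat.sub_self, zero_add] at h1
    exact ⟨eq_of_directionRank_eq hx' hxu' hx hxu h1 heq, rfl⟩
  · exact (hE.not_adj_geodesic hCl hC hx hxu (hCl hx') (Nat.sub_pos_of_lt hlt) (Nat.sub_le _ _)
      (h0 ▸ hxu')).elim

lemma eq_of_directionEdge_eq (hx' : x' ∈ C) (hxu' : G.Adj x' u')
    (he : directionEdge T C u x = directionEdge T C u' x') : x = x' ∧ u = u' := by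
  have hr := hE.reachable_of_adj (hCl hx) hxu
  rcases (isPathSeq_geodesic hr).edge_eq_cases
    (isPathSeq_geodesic (hE.reachable_of_adj (hCl hx') hxu'))
    (hE.directionRank_lt_dist hCl hC hx hxu) (hE.directionRank_lt_dist hCl hC hx' hxu')
    (by rw [geodesic_dist hr]; exact hCl hx)
    (fun _ h0 hj => hE.ndegree_geodesic_le_two hCl hC hx hxu h0 hj)
    (fun _ h0 hj => hE.ndegree_geodesic_le_two hCl hC hx' hxu' h0 hj) he with
    ⟨hle, h⟩ | ⟨hle, h⟩ | ⟨hle, h0, h, h'⟩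
  · exact hE.eq_of_geodesic_directionRank_eq_sub_add hCl hC hx' hxu' hx hxu hle h
  · exact (hE.eq_of_geodesic_directionRank_eq_sub_add hCl hC hx hxu hx' hxu' hle h).imp
      Eq.symm Eq.symm
  · rw [geodesic_zero] at h0
    exact (hE.not_directionEdge_opposite hCl hC hx hxu hx' hxu' hle h0 h h').elim

lemma directionEdge_ne_pathEdge (hz : z ∈ leafSet T) (hy : y ∈ leafSet T) (hyz : y ≠ z)
    (hyC : y ∉ C) (ht : t < l) : directionEdge T C u x ≠ pathEdge T y z t := by
  intro he
  have hr := hE.reachable_of_adj (hCl hx) hxu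
  have hp := isPathSeq_geodesic hr
  have hyx : x ≠ y := fun h => hyC (h ▸ hx)
  rcases hp.edge_eq_cases (isPathSeq_geodesic (hE.reachable hz hy.1))
    (hE.directionRank_lt_dist hCl hC hx hxu) (ht.trans_le (hE.le_dist hz hy hyz))
    (by rw [geodesic_dist hr]; exact hCl hx)
    (fun _ h0 hj => hE.ndegree_geodesic_le_two hCl hC hx hxu h0 hj)
    (fun _ _ hj => hE.ndegree_geodesic_le_two_of_lt hz hy hyz (hj.trans_lt ht)) he with
    ⟨-, h⟩ | ⟨-, h⟩ | ⟨hle, h, -⟩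
  · have h0 := h 0 (Nat.zero_le _)
    rw [geodesic_zero] at h0
    exact hE.not_isObstacle_geodesic_of_lt hz hy hyz (by omega)
      (Or.inr ⟨x, hCl hx, hyx, h0 ▸ hxu⟩)
  · have h0 := h 0 (Nat.zero_le _)
    rw [geodesic_zero] at h0
    have hlt := hE.directionRank_lt_dist hCl hC hx hxu
    obtain hzero | hpos := Nat.eq_zero_or_pos (directionRank T C u x - t + 0)
    · rw [hzero, geodesic_zero] at h0
      exact hE.not_adj (hCl hx) hy (h0 ▸ hxu)
    · have := hp.eq_of_mem_leafSet hpos (by omega) (h0 ▸ hy)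
      omega
  · rw [geodesic_zero] at h
    have hend := hp.eq_of_mem_leafSet (by omega) hle (h ▸ hy)
    rw [hend, geodesic_dist hr] at h
    exact hyx h.symm

end IsExtremal

end DirectionEdge

section DegreeSum

open scoped Finset

variable {G : SimpleGraph V} {T : G.Subgraph} {k l : ℕ} {C D : Finset V} {z : V}

/-- The charging map: an edge of `G` from `x ∈ C` to `u` goes to its `directionEdge`, and the pair
of an end-vertex `y` and `t < l` to the `t`-th edge from `y` towards the fixed end-vertex `z`. -/
noncomputable def chargedEdge [LinearOrder V] {G : SimpleGraph V} (T : G.Subgraph) (C : Finset V)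
    (z : V) : (Σ _ : V, V) ⊕ V × ℕ → Sym2 V :=
  Sum.elim (fun a => directionEdge T C a.2 a.1) fun a => pathEdge T a.1 z a.2

namespace IsExtremal

variable (hE : IsExtremal k l T) (hCl : ↑C ⊆ leafSet T) (hC : #C ≤ l + 1)
  (hD : ↑D = leafSet T \ ↑C) (hz : z ∈ C)
include hE hCl hC hD hz

lemma mapsTo_chargedEdge [LinearOrder V] [Fintype V] [DecidableRel G.Adj] :
    Set.MapsTo (chargedEdge T C z)
      ↑((C.sigma fun x => G.neighborFinset x).disjSum (D ×ˢ Finset.range l)) T.edgeSet := by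
  have hleaf : ∀ y ∈ D, y ∈ leafSet T ∧ y ∉ C := fun y hy => hD.subset hy
  rintro (⟨x, u⟩ | ⟨y, t⟩) ha
  · simp only [Finset.mem_coe, Finset.inl_mem_disjSum, Finset.mem_sigma, mem_neighborFinset] at ha
    exact (isPathSeq_geodesic (hE.reachable_of_adj (hCl ha.1) ha.2)).adj _
      (hE.directionRank_lt_dist hCl hC ha.1 ha.2)
  · simp only [Finset.mem_coe, Finset.inr_mem_disjSum, Finset.mem_product, Finset.mem_range] at ha
    obtain ⟨hy, hyC⟩ := hleaf y ha.1
    exact (isPathSeq_geodesic (hE.reachable (hCl hz) hy.1)).adj _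
      (ha.2.trans_le (hE.le_dist (hCl hz) hy fun h => hyC (h ▸ hz)))

lemma injOn_chargedEdge [LinearOrder V] [Fintype V] [DecidableRel G.Adj] :
    Set.InjOn (chargedEdge T C z)
      ↑((C.sigma fun x => G.neighborFinset x).disjSum (D ×ˢ Finset.range l)) := by
  have hleaf : ∀ y ∈ D, y ∈ leafSet T ∧ y ≠ z ∧ y ∉ C := fun y hy =>
    ⟨(hD.subset hy).1, fun h => (hD.subset hy).2 (h ▸ hz), (hD.subset hy).2⟩
  rintro (⟨x, u⟩ | ⟨y, t⟩) ha (⟨x', u'⟩ | ⟨y', t'⟩) hb he <;>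
    simp only [Finset.mem_coe, Finset.inl_mem_disjSum, Finset.inr_mem_disjSum, Finset.mem_sigma,
      mem_neighborFinset, Finset.mem_product, Finset.mem_range] at ha hb
  · obtain ⟨rfl, rfl⟩ := hE.eq_of_directionEdge_eq hCl hC ha.1 ha.2 hb.1 hb.2 he
    rfl
  · obtain ⟨hy, hyz, hyC⟩ := hleaf y' hb.1
    exact (hE.directionEdge_ne_pathEdge hCl hC ha.1 ha.2 (hCl hz) hy hyz hyC hb.2 he).elim
  · obtain ⟨hy, hyz, hyC⟩ := hleaf y ha.1
    exact (hE.directionEdge_ne_pathEdge hCl hC hb.1 hb.2 (hCl hz) hy hyz hyC ha.2 he.symm).elim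
  · obtain ⟨hy, hyz, -⟩ := hleaf y ha.1
    obtain ⟨hy', hyz', -⟩ := hleaf y' hb.1
    obtain ⟨rfl, rfl⟩ := hE.eq_of_pathEdge_eq (hCl hz) hy hyz hy' hyz' ha.2 hb.2 he
    rfl

omit hD hz in
lemma sum_degree_add_le [Fintype V] [DecidableRel G.Adj] (hC0 : C.Nonempty) :
    ∑ x ∈ C, G.degree x + l * (k + 1 - #C) + 1 ≤ T.verts.ncard := by
  obtain ⟨_, _⟩ := exists_wellFoundedLT V
  obtain ⟨z, hz⟩ := hC0
  obtain ⟨D, hD⟩ := (Set.toFinite (leafSet T \ ↑C)).exists_finset_coe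
  have hDcard : #D = k + 1 - #C := by
    have hsplit := Set.ncard_sdiff_add_ncard_of_subset hCl (Set.toFinite _)
    rw [← hD, Set.ncard_coe_finset, Set.ncard_coe_finset, hE.ncard_leafSet] at hsplit
    omega
  have hcard := Set.ncard_le_ncard_of_injOn _ (hE.mapsTo_chargedEdge hCl hC hD hz)
    (hE.injOn_chargedEdge hCl hC hD hz) (Set.toFinite _)
  rw [Set.ncard_coe_finset, Finset.card_disjSum, Finset.card_sigma, Finset.card_product,
    Finset.card_range, hDcard, mul_comm] at hcard
  simp only [card_neighborFinset_eq_degree] at hcard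
  rw [← ncard_edgeSet_of_isTree hE.isTree]
  exact Nat.succ_le_succ hcard

end IsExtremal

end DegreeSum

/-! ### Largest `k`-ended trees -/

section Order

variable [Finite V] {G : SimpleGraph V} {k l : ℕ}

lemma bddAbove_ncard_verts (G : SimpleGraph V) (k : ℕ) :
    BddAbove {n | ∃ H : G.Subgraph, IsKEndedTree G k H ∧ H.verts.ncard = n} :=
  ⟨Nat.card V, by rintro _ ⟨H, -, rfl⟩; exact Set.ncard_le_card H.verts⟩

lemma IsKEndedTree.ncard_verts_le {T : G.Subgraph} (h : IsKEndedTree G k T) :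
    T.verts.ncard ≤ maxKEndedOrder G k :=
  le_csSup (bddAbove_ncard_verts G k) ⟨T, h, rfl⟩

lemma exists_isKEndedTree_ncard_verts_eq (h : 0 < maxKEndedOrder G k) :
    ∃ T : G.Subgraph, IsKEndedTree G k T ∧ T.verts.ncard = maxKEndedOrder G k := by
  refine Nat.sSup_mem (Set.nonempty_iff_ne_empty.2 fun hempty => h.ne' ?_)
    (bddAbove_ncard_verts G k)
  rw [maxKEndedOrder, hempty, csSup_empty, bot_eq_zero]

lemma exists_isExtremal (hk : 1 ≤ k) (hl : 1 ≤ l)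
    (h : maxKEndedOrder G k + l ≤ maxKEndedOrder G (k + 1)) :
    ∃ T : G.Subgraph, IsExtremal k l T ∧ T.verts.ncard = maxKEndedOrder G (k + 1) := by
  obtain ⟨T, hT, hcard⟩ := exists_isKEndedTree_ncard_verts_eq (G := G) (k := k + 1) (by omega)
  have hnot : ¬ IsKEndedTree G k T := fun hT' => by
    have := hT'.ncard_verts_le
    omega
  obtain ⟨htree, hleaf⟩ | ⟨-, hcyc⟩ := hT
  · refine ⟨T, ⟨hk, hl, htree, ?_, fun T' hT' => hT'.ncard_verts_le.trans hcard.ge,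
      fun T' hT' => ?_⟩, hcard⟩
    · exact hleaf.antisymm (not_le.1 fun hle => hnot (Or.inl ⟨htree, hle⟩))
    · have := hT'.ncard_verts_le
      omega
  · exact (hnot (Or.inr ⟨hk, hcyc⟩)).elim

end Order

theorem theorem2_general [Fintype V] (G : SimpleGraph V) [DecidableRel G.Adj] (k l m : ℕ)
    (hk : 1 ≤ k) (hl : 1 ≤ l) (hm : 1 ≤ m) (hmk : m ≤ k + 1) (hml : m ≤ l + 1) :
    minDegreeSum G m + ((l * (k + 1 - m) : ℕ) : ℕ∞) + 1 ≤
        (maxKEndedOrder G (k + 1) : ℕ∞) ∨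
      maxKEndedOrder G k + l ≥ maxKEndedOrder G (k + 1) + 1 := by
  refine or_iff_not_imp_right.2 fun h => ?_
  obtain ⟨T, hE, hT⟩ := exists_isExtremal (G := G) hk hl (by omega)
  obtain ⟨C, hCl, rfl⟩ := Set.exists_subset_card_eq (hmk.trans hE.ncard_leafSet.ge)
  lift C to Finset V using Set.toFinite C
  rw [Set.ncard_coe_finset] at hm hml ⊢
  have hσ : minDegreeSum G C.card ≤ ((∑ x ∈ C, G.degree x : ℕ) : ℕ∞) := by
    push_cast
    exact iInf₂_le C ⟨rfl, fun u hu v hv => hE.not_adj (hCl hu) (hCl hv)⟩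
  have hsum := hE.sum_degree_add_le hCl hml (Finset.card_pos.1 hm)
  rw [hT] at hsum
  calc minDegreeSum G C.card + ((l * (k + 1 - C.card) : ℕ) : ℕ∞) + 1
      ≤ ((∑ x ∈ C, G.degree x : ℕ) : ℕ∞) + ((l * (k + 1 - C.card) : ℕ) : ℕ∞) + 1 := by gcongr
    _ ≤ (maxKEndedOrder G (k + 1) : ℕ∞) := by exact_mod_cast hsum

/-- **Theorem 2.** If `G` is connected and `k, λ, m` are positive integers with
`2 ≤ m ≤ min{k, λ} + 1`, then either `t_{k+1} ≥ σ_m + λ(k - m + 1) + 1` or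
`t_k ≥ t_{k+1} - λ + 1`. -/
theorem theorem2 [Fintype V] (G : SimpleGraph V) [DecidableRel G.Adj]
    (hG : G.Connected) (k l m : ℕ) (hk : 1 ≤ k) (hl : 1 ≤ l)
    (hm : 2 ≤ m) (hmk : m ≤ k + 1) (hml : m ≤ l + 1) :
    minDegreeSum G m + ((l * (k + 1 - m) : ℕ) : ℕ∞) + 1 ≤
        (maxKEndedOrder G (k + 1) : ℕ∞) ∨
      maxKEndedOrder G k + l ≥ maxKEndedOrder G (k + 1) + 1 :=
  theorem2_general G k l m hk hl (one_le_two.trans hm) hmk hml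
end
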